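/- arXiv:0803.1860 — 3 statements merged into one kernel-verified Lean document; each statement's English description precedes it below -/
import Mathlib

section
/- Let r,s ≥ 1. If every nonempty subgraph of a graph G has a vertex of degree at most one, or a vertex of degree at most s all of whose neighbors have degree at most r (degrees taken within that subgraph), then G is (s, r+1)-degenerate. -/
/-- A graph `G` is `(d,Δ)`-degenerate if there is an ordering `v_1,…,v_n` of its vertices such
that each `v_i` has at most `d` neighbors `v_j` with `j < i`, and there are at most `Δ` distinct
sets `S ⊆ {v_1,…,v_i}` of the form `S = N(v_j) ∩ {v_1,…,v_i}` for some neighbor `v_j` of `v_i`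
with `j > i`. -/
def DDeltaDegenerate {V : Type*} [Fintype V] (G : SimpleGraph V) (d Δ : ℕ) : Prop :=
  ∃ f : Fin (Fintype.card V) ≃ V, ∀ i : Fin (Fintype.card V),
    {j : Fin (Fintype.card V) | j < i ∧ G.Adj (f j) (f i)}.ncard ≤ d ∧
    {S : Set V | ∃ j : Fin (Fintype.card V), i < j ∧ G.Adj (f j) (f i) ∧
        S = {v : V | G.Adj (f j) v ∧ f.symm v ≤ i}}.ncard ≤ Δ


lemma exists_peeling {V : Type*} [DecidableEq V] (P : Finset V → V → Prop)
    (h : ∀ t : Finset V, t.Nonempty → ∃ v ∈ t, P t v) :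
    ∀ (n : ℕ) (t : Finset V), t.card = n → ∃ g : V → ℕ, Set.InjOn g t ∧ (∀ v ∈ t, g v < n) ∧
      ∀ v ∈ t, P (t.filter (fun u => g u ≤ g v)) v := by
  intro n
  induction n with
  | zero =>
    intro t ht
    rw [Finset.card_eq_zero] at ht
    subst ht
    exact ⟨fun _ => 0, by simp, by simp, by simp⟩
  | succ n ih =>
    intro t ht
    obtain ⟨v, hv, hP⟩ := h t (Finset.card_pos.mp (by omega))
    obtain ⟨g, hinj, hlt, hg⟩ := ih (t.erase v) (by rw [Finset.card_erase_of_mem hv]; omega)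
    have hne : ∀ u ∈ t, u ≠ v → g u < n := fun u hu huv => hlt u (Finset.mem_erase.2 ⟨huv, hu⟩)
    have hgu : ∀ u, u ≠ v → Function.update g v n u = g u :=
      fun u hu => Function.update_of_ne hu _ _
    have hgv : Function.update g v n v = n := Function.update_self _ _ _
    refine ⟨Function.update g v n, ?_, ?_, ?_⟩
    · intro a ha b hb hab
      by_cases h1 : a = v <;> by_cases h2 : b = v
      · rw [h1, h2]
      · subst h1
        rw [hgv, hgu b h2] at hab
        have := hne b hb h2
        omega
      · subst h2
        rw [hgv, hgu a h1] at hab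
        have := hne a ha h1
        omega
      · rw [hgu a h1, hgu b h2] at hab
        exact hinj (by simpa [h1] using ha) (by simpa [h2] using hb) hab
    · intro u hu
      by_cases h1 : u = v
      · subst h1; rw [hgv]; omega
      · rw [hgu u h1]; have := hne u hu h1; omega
    · intro u hu
      by_cases h1 : u = v
      · subst h1
        rw [hgv]
        have : t.filter (fun w => Function.update g u n w ≤ n) = t := by
          rw [Finset.filter_eq_self]
          intro w hw
          by_cases h2 : w = u
          · subst h2; rw [hgv]
          · rw [hgu w h2]; exact (hne w hw h2).le
        rw [this]; exact hP
      · rw [hgu u h1]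
        have : t.filter (fun w => Function.update g v n w ≤ g u)
            = (t.erase v).filter (fun w => g w ≤ g u) := by
          ext w
          simp only [Finset.mem_filter, Finset.mem_erase]
          by_cases h2 : w = v
          · subst h2
            have := hne u hu h1
            rw [hgv]
            constructor
            · rintro ⟨_, h3⟩; omega
            · rintro ⟨⟨h3, _⟩, _⟩; exact absurd rfl h3
          · rw [hgu w h2]; tauto
        rw [this]
        exact hg u (Finset.mem_erase.2 ⟨h1, hu⟩)

/-- Let `r, s ≥ 1`. If every nonempty subgraph of `G` has a vertex of degree at most one, or a
vertex of degree at most `s` all of whose neighbors have degree at most `r` (degrees within that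
subgraph), then `G` is `(s, r+1)`-degenerate. -/
theorem stmt_4 {V : Type*} [Fintype V] (G : SimpleGraph V) (r s : ℕ) (hr : 1 ≤ r) (hs : 1 ≤ s)
    (h : ∀ t : Finset V, t.Nonempty →
      (∃ v ∈ t, {u : V | u ∈ t ∧ G.Adj v u}.ncard ≤ 1) ∨
      (∃ v ∈ t, {u : V | u ∈ t ∧ G.Adj v u}.ncard ≤ s ∧
        ∀ u ∈ t, G.Adj v u → {w : V | w ∈ t ∧ G.Adj u w}.ncard ≤ r)) :
    DDeltaDegenerate G s (r + 1) := by
  classical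
  let A : Finset V → V → Prop := fun t v => {u : V | u ∈ t ∧ G.Adj v u}.ncard ≤ 1
  let B : Finset V → V → Prop := fun t v => {u : V | u ∈ t ∧ G.Adj v u}.ncard ≤ s ∧
        ∀ u ∈ t, G.Adj v u → {w : V | w ∈ t ∧ G.Adj u w}.ncard ≤ r
  obtain ⟨g, hinj, hlt, hg⟩ := exists_peeling (fun t v => A t v ∨ B t v) (by
    intro t ht
    rcases h t ht with ⟨v, hv, h1⟩ | ⟨v, hv, h1⟩
    · exact ⟨v, hv, Or.inl h1⟩
    · exact ⟨v, hv, Or.inr h1⟩) (Fintype.card V) Finset.univ rfl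
  let e0 : V → Fin (Fintype.card V) := fun v => ⟨g v, hlt v (Finset.mem_univ v)⟩
  have he0 : Function.Bijective e0 := by
    rw [Fintype.bijective_iff_injective_and_card]
    refine ⟨fun a b hab => hinj (by simp) (by simp) (by simpa [e0] using hab), by simp⟩
  let e : V ≃ Fin (Fintype.card V) := Equiv.ofBijective e0 he0
  have hle : ∀ u v, g u ≤ g v ↔ e u ≤ e v := fun u v => Iff.rfl
  let T : V → Finset V := fun v => Finset.univ.filter (fun u => g u ≤ g v)
  have hT : ∀ u v, u ∈ T v ↔ e u ≤ e v := by
    intro u v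
    simp only [T, Finset.mem_filter, Finset.mem_univ, true_and]
    exact hle u v
  have hgT : ∀ v, A (T v) v ∨ B (T v) v := fun v => hg v (Finset.mem_univ v)
  refine ⟨e.symm, fun i => ⟨?_, ?_⟩⟩
  · have h1 : {u : V | u ∈ T (e.symm i) ∧ G.Adj (e.symm i) u}.ncard ≤ s := by
      rcases hgT (e.symm i) with h1 | h1
      · exact le_trans h1 hs
      · exact h1.1
    refine le_trans ?_ h1
    refine Set.ncard_le_ncard_of_injOn e.symm ?_ e.symm.injective.injOn (Set.toFinite _)
    rintro j ⟨hj, hadj⟩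
    exact ⟨(hT _ _).2 (by simpa using hj.le), hadj.symm⟩
  · rw [Equiv.symm_symm]
    let C : Set V := {u | i < e u ∧ G.Adj u (e.symm i) ∧ B (T u) u}
    have hC : C.ncard ≤ r := by
      rcases C.eq_empty_or_nonempty with h0 | h0
      · rw [h0]; simp
      · obtain ⟨m, hm, hmax⟩ := Set.exists_max_image C e (Set.toFinite _) h0
        have h2 := hm.2.2.2 (e.symm i) ((hT _ _).2 (by simpa using hm.1.le)) hm.2.1
        refine le_trans (Set.ncard_le_ncard ?_ (Set.toFinite _)) h2
        intro u hu
        exact ⟨(hT _ _).2 (hmax u hu), hu.2.1.symm⟩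
    let F : V → Set V := fun u => {v : V | G.Adj u v ∧ e v ≤ i}
    have hsub : {S : Set V | ∃ j : Fin (Fintype.card V), i < j ∧ G.Adj (e.symm j) (e.symm i) ∧
        S = {v : V | G.Adj (e.symm j) v ∧ e v ≤ i}} ⊆ insert {e.symm i} (Set.image F C) := by
      rintro S ⟨j, hij, hadj, rfl⟩
      rcases hgT (e.symm j) with h1 | h1
      · left
        have hone := (Set.ncard_le_one (Set.toFinite _)).1 h1
        ext v
        simp only [Set.mem_ofPred_eq, Set.mem_singleton_iff]
        constructor
        · rintro ⟨h2, h3⟩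
          exact hone v ⟨(hT _ _).2 (by simpa using h3.trans hij.le), h2⟩ (e.symm i)
            ⟨(hT _ _).2 (by simpa using hij.le), hadj⟩
        · rintro rfl
          exact ⟨hadj, by simp⟩
      · right
        exact ⟨e.symm j, ⟨by simpa using hij, hadj, h1⟩, rfl⟩
    refine le_trans (Set.ncard_le_ncard hsub (Set.toFinite _)) ?_
    refine le_trans (Set.ncard_insert_le _ _) ?_
    have := Set.ncard_image_le (f := F) (Set.toFinite C)
    omega
end

section
/- For every positive integer d there is a constant c_d such that every d-degenerate graph H on n ≥ 2 vertices satisfies r(H) ≤ 2^{c_d √(log n)} · n, where r(H) is the two-color Ramsey number of H. -/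
/-- A graph is `d`-degenerate if every nonempty (induced) subgraph has a vertex of degree
at most `d`. -/
def DDegenerate {V : Type*} (G : SimpleGraph V) (d : ℕ) : Prop :=
  ∀ s : Finset V, s.Nonempty → ∃ v ∈ s, {u : V | u ∈ s ∧ G.Adj v u}.ncard ≤ d


/-- `HasRamsey H N` means every two-coloring of the edges of `K_N` (given by a graph `C` on
`Fin N` of red edges, the blue edges being its complement) contains a monochromatic copy of
`H`. -/
def HasRamsey {W : Type*} (H : SimpleGraph W) (N : ℕ) : Prop :=
  ∀ C : SimpleGraph (Fin N),
    (∃ f : W ↪ Fin N, ∀ a b : W, H.Adj a b → C.Adj (f a) (f b)) ∨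
    (∃ f : W ↪ Fin N, ∀ a b : W, H.Adj a b → Cᶜ.Adj (f a) (f b))

/-- The two-color Ramsey number of `H`: the least `N` such that every two-coloring of the edges
of `K_N` contains a monochromatic copy of `H`. -/
noncomputable def ramseyNumber {W : Type*} (H : SimpleGraph W) : ℕ :=
  sInf {N : ℕ | HasRamsey H N}

section Helpers
open Finset Classical

def GoodSeq {V : Type} (R : Bool → V → V → Prop) (q m : ℕ) (U : Finset V)
    (T : Fin m → Fin q → V) : Prop :=
  (∀ i a, T i a ∈ U) ∧
    ∃ c : Fin m → Bool, ∀ i j, i < j → ∀ a b, R (c i) (T i a) (T j b)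

/-- power mean, division free -/
lemma power_mean {ι : Type} (s : Finset ι) (f : ι → ℝ) (hf : ∀ i ∈ s, 0 ≤ f i) (n : ℕ) :
    (∑ i ∈ s, f i) ^ (n + 1) ≤ (s.card : ℝ) ^ n * ∑ i ∈ s, f i ^ (n + 1) := by
  exact pow_sum_le_card_mul_sum_pow hf n

lemma color_step {V : Type} [Fintype V] (R : Bool → V → V → Prop)
    (hR : ∀ x y, R true x y ∨ R false x y) (q : ℕ) (hq : 0 < q) (U : Finset V) :
    ∃ col : Bool, (U.card : ℝ) ^ (q + 1) ≤
      2 ^ q * ∑ t ∈ Fintype.piFinset (fun _ : Fin q => U),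
        ((U.filter (fun x => ∀ a, R col (t a) x)).card : ℝ) := by
  have hdeg : ∃ col : Bool, (U.card : ℝ) ^ 2 ≤
      2 * ∑ x ∈ U, ((U.filter (fun y => R col y x)).card : ℝ) := by
    have h : (U.card : ℝ) ^ 2 ≤ ∑ x ∈ U, ((U.filter (fun y => R true y x)).card : ℝ) +
        ∑ x ∈ U, ((U.filter (fun y => R false y x)).card : ℝ) := by
      rw [← Finset.sum_add_distrib]
      calc (U.card : ℝ) ^ 2 = ∑ x ∈ U, (U.card : ℝ) := by simp [sq]
        _ ≤ _ := by
          apply Finset.sum_le_sum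
          intro x _
          have : U.card ≤ (U.filter (fun y => R true y x)).card +
              (U.filter (fun y => R false y x)).card := by
            refine le_trans (Finset.card_le_card ?_) (Finset.card_union_le _ _)
            intro y hy
            have := hR y x
            simp only [mem_union, mem_filter]
            tauto
          exact_mod_cast this
    by_contra hcon
    push Not at hcon
    have h1 := hcon true
    have h2 := hcon false
    linarith
  obtain ⟨col, hcol⟩ := hdeg
  refine ⟨col, ?_⟩
  have hswap : ∑ t ∈ Fintype.piFinset (fun _ : Fin q => U),
        ((U.filter (fun x => ∀ a, R col (t a) x)).card : ℝ) =
      ∑ x ∈ U, ((U.filter (fun y => R col y x)).card : ℝ) ^ q := by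
    have h1 : ∑ t ∈ Fintype.piFinset (fun _ : Fin q => U),
        (U.filter (fun x => ∀ a, R col (t a) x)).card =
      ∑ x ∈ U, ((U.filter (fun y => R col y x)).card) ^ q := by
      have := Finset.sum_card_bipartiteAbove_eq_sum_card_bipartiteBelow
        (s := Fintype.piFinset (fun _ : Fin q => U)) (t := U)
        (fun t x => ∀ a, R col (t a) x)
      simp only [Finset.bipartiteAbove, Finset.bipartiteBelow] at this
      rw [this]
      refine Finset.sum_congr rfl fun x _ => ?_
      have h2 : (Fintype.piFinset (fun _ : Fin q => U)).filter (fun t => ∀ a, R col (t a) x) =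
        Fintype.piFinset (fun _ : Fin q => U.filter (fun y => R col y x)) := by
        ext t
        simp [Fintype.mem_piFinset, forall_and]
      rw [h2, Fintype.card_piFinset_const]
    have h3 := congrArg (Nat.cast : ℕ → ℝ) h1
    simp only [Nat.cast_sum, Nat.cast_pow] at h3
    exact h3
  rw [hswap]
  obtain ⟨p, rfl⟩ : ∃ p, q = p + 1 := ⟨q - 1, by omega⟩
  have hp := power_mean U (fun x => ((U.filter (fun y => R col y x)).card : ℝ))
    (fun _ _ => Nat.cast_nonneg _) p
  rcases Nat.eq_zero_or_pos U.card with h0 | h0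
  · rw [h0, Nat.cast_zero, zero_pow (Nat.succ_ne_zero _)]
    exact mul_nonneg (pow_nonneg (by norm_num) _)
      (sum_nonneg fun _ _ => pow_nonneg (Nat.cast_nonneg _) _)
  have hpos : (0 : ℝ) < (U.card : ℝ) ^ p := by positivity
  refine le_of_mul_le_mul_left ?_ hpos
  calc (U.card : ℝ) ^ p * (U.card : ℝ) ^ (p + 1 + 1) = ((U.card : ℝ) ^ 2) ^ (p + 1) := by ring
    _ ≤ (2 * ∑ x ∈ U, ((U.filter (fun y => R col y x)).card : ℝ)) ^ (p + 1) := by gcongr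
    _ = 2 ^ (p + 1) * (∑ x ∈ U, ((U.filter (fun y => R col y x)).card : ℝ)) ^ (p + 1) := by
      rw [mul_pow]
    _ ≤ 2 ^ (p + 1) * _ := mul_le_mul_of_nonneg_left hp (by positivity)
    _ = _ := mul_left_comm _ _ _

lemma count_good {V : Type} [Fintype V] (R : Bool → V → V → Prop)
    (hR : ∀ x y, R true x y ∨ R false x y) (q : ℕ) (hq : 0 < q) (m : ℕ) :
    ∀ U : Finset V, (U.card : ℝ) ^ (q * m) ≤
      2 ^ (q ^ 2 * m ^ 2) *
        ((univ.filter (fun T : Fin m → Fin q → V => GoodSeq R q m U T)).card : ℝ) := by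
  induction m with
  | zero =>
    intro U
    have : (univ.filter (fun T : Fin 0 → Fin q → V => GoodSeq R q 0 U T)) = univ := by
      ext T; simp [GoodSeq]
    rw [this]; simp
  | succ m ih =>
    intro U
    obtain ⟨col, hcol⟩ := color_step R hR q hq U
    set P := Fintype.piFinset (fun _ : Fin q => U) with hP
    let Nb : (Fin q → V) → Finset V := fun t => U.filter (fun x => ∀ a, R col (t a) x)
    have hsum : ∑ t ∈ P, (univ.filter
          (fun T : Fin m → Fin q → V => GoodSeq R q m (Nb t) T)).card ≤
        (univ.filter (fun T : Fin (m+1) → Fin q → V => GoodSeq R q (m+1) U T)).card := by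
      rw [← Finset.card_sigma]
      refine Finset.card_le_card_of_injOn (fun p => (Fin.cons p.1 p.2 : Fin (m+1) → Fin q → V)) ?_ ?_
      · rintro ⟨t, T⟩ h
        simp only [coe_sigma, Set.mem_sigma_iff, mem_coe, mem_filter, mem_univ, true_and, hP,
          Fintype.mem_piFinset] at h ⊢
        obtain ⟨ht, hT, c, hc⟩ := h
        refine ⟨?_, Fin.cons col c, ?_⟩
        · intro i
          refine Fin.cases ?_ (fun i => ?_) i
          · simpa using ht
          · intro a; have := hT i a; simp [Nb] at this; simpa using this.1
        · intro i j
          refine Fin.cases ?_ (fun i => ?_) i <;> refine Fin.cases ?_ (fun j => ?_) j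
          · simp
          · intro _ a b
            have := hT j b; simp [Nb] at this; simpa using this.2 a
          · simp
          · intro hij a b
            simpa using hc i j (by simpa using hij) a b
      · rintro ⟨t, T⟩ _ ⟨t', T'⟩ _ h
        have h := Fin.cons_injective2 h
        obtain ⟨rfl, rfl⟩ := h
        rfl
    have hsum' : ∑ t ∈ P, ((univ.filter
          (fun T : Fin m → Fin q → V => GoodSeq R q m (Nb t) T)).card : ℝ) ≤
        ((univ.filter (fun T : Fin (m+1) → Fin q → V => GoodSeq R q (m+1) U T)).card : ℝ) := by
      have h3 := (Nat.cast_le (α := ℝ)).2 hsum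
      simp only [Nat.cast_sum] at h3
      exact h3
    have hPc : (P.card : ℝ) = (U.card : ℝ) ^ q := by
      rw [hP, Fintype.card_piFinset_const, Nat.cast_pow]
    have hmain : (U.card : ℝ) ^ (q * (m + 1)) ≤ 2 ^ (q ^ 2 * m) *
        ∑ t ∈ P, ((Nb t).card : ℝ) ^ (q * m) := by
      rcases Nat.eq_zero_or_pos m with rfl | hm
      · simp [hPc]
      rcases Nat.eq_zero_or_pos U.card with h0 | h0
      · rw [h0, Nat.cast_zero, zero_pow (Nat.mul_pos hq (Nat.succ_pos m)).ne']
        exact mul_nonneg (pow_nonneg (by norm_num) _)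
          (sum_nonneg fun _ _ => pow_nonneg (Nat.cast_nonneg _) _)
      obtain ⟨p, hp⟩ : ∃ p, q * m = p + 1 := ⟨q * m - 1, by
        have := Nat.mul_pos hq hm; omega⟩
      have h := power_mean P (fun t => ((Nb t).card : ℝ)) (fun _ _ => Nat.cast_nonneg _) p
      have hpos : (0 : ℝ) < ((U.card : ℝ) ^ q) ^ p := by positivity
      refine le_of_mul_le_mul_left ?_ hpos
      calc ((U.card : ℝ) ^ q) ^ p * (U.card : ℝ) ^ (q * (m + 1))
          = ((U.card : ℝ) ^ (q + 1)) ^ (p + 1) := by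
            rw [mul_add, hp, mul_one]; ring
        _ ≤ (2 ^ q * ∑ t ∈ P, ((Nb t).card : ℝ)) ^ (p + 1) := by gcongr
        _ = (2 ^ q) ^ (p + 1) * (∑ t ∈ P, ((Nb t).card : ℝ)) ^ (p + 1) := by rw [mul_pow]
        _ ≤ (2 ^ q) ^ (p + 1) * ((P.card : ℝ) ^ p * ∑ t ∈ P, ((Nb t).card : ℝ) ^ (p + 1)) := by
          gcongr
        _ = _ := by
          rw [hPc, ← hp, ← pow_mul, ← mul_assoc q q m, ← sq]
          exact mul_left_comm _ _ _
    calc (U.card : ℝ) ^ (q * (m + 1)) ≤ 2 ^ (q ^ 2 * m) *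
        ∑ t ∈ P, ((Nb t).card : ℝ) ^ (q * m) := hmain
      _ ≤ 2 ^ (q ^ 2 * m) * ∑ t ∈ P, (2 ^ (q ^ 2 * m ^ 2) * ((univ.filter
          (fun T : Fin m → Fin q → V => GoodSeq R q m (Nb t) T)).card : ℝ)) := by
        gcongr with t ht
        exact ih (Nb t)
      _ = 2 ^ (q ^ 2 * m + q ^ 2 * m ^ 2) * ∑ t ∈ P, ((univ.filter
          (fun T : Fin m → Fin q → V => GoodSeq R q m (Nb t) T)).card : ℝ) := by
        rw [← Finset.mul_sum, pow_add, mul_assoc]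
      _ ≤ 2 ^ (q ^ 2 * (m + 1) ^ 2) * _ := by
        refine mul_le_mul ?_ hsum' (sum_nonneg fun _ _ => Nat.cast_nonneg _)
          (pow_nonneg (by norm_num) _)
        refine pow_le_pow_right₀ (by norm_num) ?_
        nlinarith [Nat.zero_le (q^2 * m), Nat.zero_le (q^2)]

def BadSeq {V : Type} [Fintype V] (R : Bool → V → V → Prop) (q m d n : ℕ)
    (c : Fin (m + 1) → Bool) (j : Fin (m + 1)) (T : Fin (m + 1) → Fin q → V) : Prop :=
  (∀ i, i ≠ j → c i = c j → ∀ a b, R (c j) (T j a) (T i b)) ∧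
  ∃ S : Fin d → V, (∀ a b, R (c j) (T j a) (S b)) ∧
    (univ.filter (fun x => (∀ b, R (c j) x (S b)) ∧
      ∀ i, i ≠ j → c i = c j → ∀ b, R (c j) x (T i b))).card < n

lemma count_bad {V : Type} [Fintype V] (R : Bool → V → V → Prop) (q m d n : ℕ)
    (c : Fin (m + 1) → Bool) (j : Fin (m + 1)) :
    (univ.filter (fun T : Fin (m + 1) → Fin q → V => BadSeq R q m d n c j T)).card ≤
      Fintype.card V ^ (d + q * m) * n ^ q := by
  let X : (Fin d → V) × (Fin m → Fin q → V) → Finset V := fun p =>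
    univ.filter (fun x => (∀ b, R (c j) x (p.1 b)) ∧
      ∀ i, c (j.succAbove i) = c j → ∀ b, R (c j) x (p.2 i b))
  let Y : (Fin d → V) × (Fin m → Fin q → V) → Finset (Fin q → V) := fun p =>
    if (X p).card < n then Fintype.piFinset (fun _ => X p) else ∅
  let Z : Finset (Fin (m + 1) → Fin q → V) :=
    (univ.sigma Y).image (fun p => j.insertNth p.2 p.1.2)
  have hsub : (univ.filter (fun T : Fin (m + 1) → Fin q → V => BadSeq R q m d n c j T)) ⊆ Z := by
    intro T hT
    simp only [mem_filter, mem_univ, true_and] at hT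
    obtain ⟨h1, S, hS, hc⟩ := hT
    have hX : X (S, fun i => T (j.succAbove i)) = (univ.filter (fun x => (∀ b, R (c j) x (S b)) ∧
      ∀ i, i ≠ j → c i = c j → ∀ b, R (c j) x (T i b))) := by
      ext x
      simp only [X, mem_filter, mem_univ, true_and]
      refine and_congr_right fun _ => ⟨fun h i hi => ?_, fun h i => h _ (Fin.succAbove_ne j i)⟩
      obtain ⟨k, rfl⟩ := Fin.exists_succAbove_eq hi
      exact h k
    simp only [Z, mem_image, mem_sigma, mem_univ, true_and]
    refine ⟨⟨(S, fun i => T (j.succAbove i)), T j⟩, ?_, ?_⟩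
    · simp only [Y]
      rw [if_pos (by rw [hX]; exact hc), Fintype.mem_piFinset, hX]
      intro a
      simp only [mem_filter, mem_univ, true_and]
      exact ⟨hS a, fun i hi hci b => h1 i hi hci a b⟩
    · exact Fin.insertNth_self_removeNth j T
  calc _ ≤ Z.card := card_le_card hsub
    _ ≤ (univ.sigma Y).card := card_image_le
    _ = ∑ p, (Y p).card := card_sigma _ _
    _ ≤ ∑ p : (Fin d → V) × (Fin m → Fin q → V), n ^ q := by
      refine sum_le_sum fun p _ => ?_
      simp only [Y]
      split_ifs with h
      · simp only [Fintype.card_piFinset, prod_const, card_univ, Fintype.card_fin]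
        exact Nat.pow_le_pow_left h.le _
      · simp
    _ = _ := by
      simp [pow_add, pow_mul]

lemma exists_seq {V : Type} [Fintype V] (R : Bool → V → V → Prop)
    (hR : ∀ x y, R true x y ∨ R false x y) (q m d n : ℕ) (hq : 0 < q)
    (hN : 2 ^ (2 * (m + 1)) * 2 ^ (q ^ 2 * (m + 1) ^ 2) * Fintype.card V ^ d * n ^ q
      < Fintype.card V ^ q) :
    ∃ T : Fin (m + 1) → Fin q → V, GoodSeq R q (m + 1) univ T ∧
      ∀ c j, ¬ BadSeq R q m d n c j T := by
  by_contra hcon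
  push Not at hcon
  have h1 := count_good R hR q hq (m + 1) univ
  have h1' : Fintype.card V ^ (q * (m + 1)) ≤ 2 ^ (q ^ 2 * (m + 1) ^ 2) *
      (univ.filter (fun T : Fin (m + 1) → Fin q → V => GoodSeq R q (m + 1) univ T)).card := by
    rw [card_univ] at h1
    exact_mod_cast h1
  have h2 : (univ.filter (fun T : Fin (m + 1) → Fin q → V => GoodSeq R q (m + 1) univ T)).card ≤
      2 ^ (2 * (m + 1)) * (Fintype.card V ^ (d + q * m) * n ^ q) := by
    calc _ ≤ ((univ : Finset ((Fin (m + 1) → Bool) × Fin (m + 1))).biUnion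
        (fun p => univ.filter
          (fun T : Fin (m + 1) → Fin q → V => BadSeq R q m d n p.1 p.2 T))).card := by
          refine card_le_card fun T hT => ?_
          simp only [mem_filter, mem_univ, true_and] at hT
          obtain ⟨c, j, h⟩ := hcon T hT
          simp only [mem_biUnion, mem_filter, mem_univ, true_and]
          exact ⟨(c, j), h⟩
      _ ≤ _ := card_biUnion_le
      _ ≤ ∑ p : (Fin (m + 1) → Bool) × Fin (m + 1),
          (Fintype.card V ^ (d + q * m) * n ^ q) :=
          sum_le_sum fun p _ => count_bad R q m d n p.1 p.2
      _ = 2 ^ (m + 1) * (m + 1) * (Fintype.card V ^ (d + q * m) * n ^ q) := by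
          simp
      _ ≤ _ := by
          gcongr
          rw [two_mul, pow_add 2 (m + 1) (m + 1)]
          gcongr
          exact Nat.lt_two_pow_self.le
  have hVpos : 0 < Fintype.card V := by
    rcases Nat.eq_zero_or_pos (Fintype.card V) with h | h
    · rw [h, zero_pow hq.ne'] at hN; omega
    · exact h
  have h3 : Fintype.card V ^ (q * (m + 1)) ≤ (2 ^ (2 * (m + 1)) * 2 ^ (q ^ 2 * (m + 1) ^ 2) *
      Fintype.card V ^ d * n ^ q) * Fintype.card V ^ (q * m) := by
    calc _ ≤ _ := h1'
      _ ≤ _ := Nat.mul_le_mul_left _ h2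
      _ = _ := by rw [pow_add]; ring
  have h4 : Fintype.card V ^ (q * (m + 1)) = Fintype.card V ^ q * Fintype.card V ^ (q * m) := by
    rw [← pow_add]; ring_nf
  rw [h4] at h3
  have := Nat.le_of_mul_le_mul_right h3 (by positivity)
  omega

lemma enum_pad {V : Type} (S : Finset V) (d : ℕ) (hS : S.card ≤ d) (p : V) :
    ∃ g : Fin d → V, (∀ x ∈ S, ∃ b, g b = x) ∧ ∀ b, g b ∈ S ∨ g b = p := by
  refine ⟨fun b => S.toList.getD b p, ?_, ?_⟩
  · intro x hx
    obtain ⟨i, hi, h⟩ := List.mem_iff_getElem.1 (Finset.mem_toList.2 hx)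
    have hi' : i < S.card := by simpa using hi
    refine ⟨⟨i, by omega⟩, ?_⟩
    simp only
    rw [List.getD_eq_getElem _ _ hi, h]
  · intro b
    by_cases hb : (b : ℕ) < S.toList.length
    · left
      simp only
      rw [List.getD_eq_getElem _ _ hb]
      exact Finset.mem_toList.1 (List.getElem_mem hb)
    · right
      simp only
      rw [List.getD_eq_default _ _ (by omega)]

lemma embed {V W : Type} [Fintype V] [Fintype W] (H : SimpleGraph W) (d q m n : ℕ)
    (hd : 1 ≤ d) (hq : 0 < q) (hW : Fintype.card W = n) (hH : DDegenerate H d)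
    (Q : V → V → Prop) (hQ : ∀ x y, Q x y → Q y x) (J : Finset (Fin (m + 1)))
    (hJ : d + 1 ≤ J.card) (T : Fin (m + 1) → Fin q → V)
    (hT : ∀ i ∈ J, ∀ j ∈ J, i ≠ j → ∀ a b, Q (T i a) (T j b))
    (hext : ∀ j ∈ J, ∀ S : Fin d → V, (∀ a b, Q (T j a) (S b)) →
      n ≤ (univ.filter (fun x => (∀ b, Q x (S b)) ∧
        ∀ i ∈ J, i ≠ j → ∀ b, Q x (T i b))).card) :
    ∃ f : W ↪ V, ∀ a b, H.Adj a b → Q (f a) (f b) := by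
  have key : ∀ k, ∀ s : Finset W, s.card = k → ∃ f : W → V, ∃ χ : W → Fin (m + 1),
      Set.InjOn f s ∧ ∀ a ∈ s, χ a ∈ J ∧ (∀ i ∈ J, i ≠ χ a → ∀ b, Q (f a) (T i b)) ∧
        ∀ b ∈ s, H.Adj a b → χ a ≠ χ b ∧ Q (f a) (f b) := by
    intro k
    induction k with
    | zero =>
      intro s hs
      rw [Finset.card_eq_zero] at hs
      subst hs
      exact ⟨fun _ => T 0 ⟨0, hq⟩, fun _ => 0, by simp, by simp⟩
    | succ k ih =>
      intro s hs
      obtain ⟨v, hv, hdeg⟩ := hH s (Finset.card_pos.1 (by omega))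
      obtain ⟨f, χ, hinj, hf⟩ := ih (s.erase v) (by rw [card_erase_of_mem hv]; omega)
      set B : Finset W := s.filter (fun u => H.Adj v u) with hB
      have hBc : B.card ≤ d := by
        have : {u : W | u ∈ s ∧ H.Adj v u} = (B : Set W) := by ext; simp [hB]
        rwa [this, Set.ncard_coe_finset] at hdeg
      have hBs : ∀ u ∈ B, u ∈ s.erase v ∧ H.Adj v u := by
        intro u hu
        rw [hB, mem_filter] at hu
        exact ⟨mem_erase.2 ⟨hu.2.ne', hu.1⟩, hu.2⟩
      -- a free colour
      obtain ⟨j, hjJ, hj⟩ : ∃ j ∈ J, j ∉ B.image χ := by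
        by_contra hcon
        push Not at hcon
        have h1 : J.card ≤ (B.image χ).card := card_le_card hcon
        have h2 : (B.image χ).card ≤ B.card := card_image_le
        omega
      -- a different index for padding
      obtain ⟨i, hiJ, hij⟩ : ∃ i ∈ J, i ≠ j := exists_mem_ne (by omega) j
      obtain ⟨g, hg1, hg2⟩ := enum_pad (B.image f) d (card_image_le.trans hBc) (T i ⟨0, hq⟩)
      have hne : ∀ u ∈ B, j ≠ χ u := by
        intro u hu h
        exact hj (h ▸ mem_image_of_mem χ hu)
      have hX := hext j hjJ g (by
        intro a b
        rcases hg2 b with h | h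
        · obtain ⟨u, hu, h⟩ := mem_image.1 h
          rw [← h]
          exact hQ _ _ ((hf u (hBs u hu).1).2.1 j hjJ (hne u hu) a)
        · rw [h]
          exact hT j hjJ i hiJ hij.symm _ _)
      obtain ⟨x, hx, hxn⟩ : ∃ x ∈ (univ.filter (fun x => (∀ b, Q x (g b)) ∧
        ∀ i ∈ J, i ≠ j → ∀ b, Q x (T i b))), x ∉ (s.erase v).image f := by
        by_contra hcon
        push Not at hcon
        have h1 := card_le_card hcon
        have h2 : ((s.erase v).image f).card ≤ (s.erase v).card := card_image_le
        rw [card_erase_of_mem hv] at h2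
        have h3 : s.card ≤ n := hW ▸ card_le_univ s
        omega
      simp only [mem_filter, mem_univ, true_and] at hx
      obtain ⟨hx1, hx2⟩ := hx
      have hxB : ∀ u ∈ B, Q x (f u) := by
        intro u hu
        obtain ⟨b, hb⟩ := hg1 (f u) (mem_image_of_mem f hu)
        rw [← hb]
        exact hx1 b
      have hBmem : ∀ u ∈ s, H.Adj v u → u ∈ B := fun u hu h => by
        rw [hB, mem_filter]; exact ⟨hu, h⟩
      have hxne : ∀ u ∈ s, u ≠ v → f u ≠ x := fun u hu huv h =>
        hxn (h ▸ mem_image_of_mem f (mem_erase.2 ⟨huv, hu⟩))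
      refine ⟨Function.update f v x, Function.update χ v j, ?_, ?_⟩
      · intro a ha b hb hab
        by_cases hav : a = v <;> by_cases hbv : b = v
        · rw [hav, hbv]
        · subst hav
          rw [Function.update_self, Function.update_of_ne hbv] at hab
          exact absurd hab.symm (hxne b hb hbv)
        · subst hbv
          rw [Function.update_self, Function.update_of_ne hav] at hab
          exact absurd hab (hxne a ha hav)
        · rw [Function.update_of_ne hav, Function.update_of_ne hbv] at hab
          exact hinj (mem_coe.2 (mem_erase.2 ⟨hav, ha⟩)) (mem_coe.2 (mem_erase.2 ⟨hbv, hb⟩)) hab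
      · intro a ha
        by_cases hav : a = v
        · subst hav
          rw [Function.update_self, Function.update_self]
          refine ⟨hjJ, hx2, fun b hb hab => ?_⟩
          rw [Function.update_of_ne hab.ne', Function.update_of_ne hab.ne']
          exact ⟨hne b (hBmem b hb hab), hxB b (hBmem b hb hab)⟩
        · obtain ⟨h1, h2, h3⟩ := hf a (mem_erase.2 ⟨hav, ha⟩)
          rw [Function.update_of_ne hav, Function.update_of_ne hav]
          refine ⟨h1, h2, fun b hb hab => ?_⟩
          by_cases hbv : b = v
          · subst hbv
            rw [Function.update_self, Function.update_self]
            exact ⟨(hne a (hBmem a ha hab.symm)).symm, hQ _ _ (hxB a (hBmem a ha hab.symm))⟩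
          · rw [Function.update_of_ne hbv, Function.update_of_ne hbv]
            exact h3 b (mem_erase.2 ⟨hbv, hb⟩) hab
  obtain ⟨f, χ, hinj, hf⟩ := key _ univ rfl
  refine ⟨⟨f, fun a b h => hinj (by simp) (by simp) h⟩, fun a b hab => ?_⟩
  exact ((hf a (mem_univ a)).2.2 b (mem_univ b) hab).2

lemma hasRamsey_of {W : Type} [Fintype W] (H : SimpleGraph W) (d q n N : ℕ)
    (hd : 1 ≤ d) (hq : 0 < q) (hW : Fintype.card W = n) (hH : DDegenerate H d)
    (hN : 2 ^ (2 * (2 * d + 1)) * 2 ^ (q ^ 2 * (2 * d + 1) ^ 2) * N ^ d * n ^ q < N ^ q) :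
    HasRamsey H N := by
  intro C
  let R : Bool → Fin N → Fin N → Prop := fun b x y => if b then C.Adj x y else ¬ C.Adj x y
  have hR : ∀ x y, R true x y ∨ R false x y := by
    intro x y; simpa [R] using _root_.em (C.Adj x y)
  have hsym : ∀ c x y, R c x y → R c y x := by
    intro c x y; cases c <;> simp [R, C.adj_comm]
  obtain ⟨T, ⟨_, c, hc⟩, hbad⟩ := exists_seq R hR q (2 * d) d n hq (by simpa using hN)
  have hc' : ∀ i j, i ≠ j → c i = c j → ∀ a b, R (c i) (T i a) (T j b) := by
    intro i j hij hcij a b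
    rcases lt_or_gt_of_ne hij with h | h
    · exact hc i j h a b
    · rw [hcij]; exact hsym _ _ _ (hc j i h b a)
  obtain ⟨col, hcol⟩ : ∃ col, d + 1 ≤ (univ.filter (fun i => c i = col)).card := by
    by_contra hcon
    push Not at hcon
    have h1 := hcon true
    have h2 := hcon false
    have h3 : (univ : Finset (Fin (2 * d + 1))).card ≤ (univ.filter (fun i => c i = true)).card +
        (univ.filter (fun i => c i = false)).card := by
      refine le_trans (Finset.card_le_card ?_) (Finset.card_union_le _ _)
      intro i _
      cases h : c i <;> simp [h]
    rw [card_univ, Fintype.card_fin] at h3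
    omega
  obtain ⟨f, hf⟩ := embed H d q (2 * d) n hd hq hW hH (R col) (hsym col)
    (univ.filter (fun i => c i = col)) hcol T (by
      intro i hi j hj hij a b
      simp only [mem_filter, mem_univ, true_and] at hi hj
      rw [← hi]
      exact hc' i j hij (hi.trans hj.symm) a b) (by
      intro j hj S hS
      simp only [mem_filter, mem_univ, true_and] at hj
      by_contra hlt
      apply hbad c j
      refine ⟨fun i hi hci a b => hc' j i hi.symm hci.symm a b, S, by rw [hj]; exact hS, ?_⟩
      push Not at hlt
      refine lt_of_le_of_lt (card_le_card ?_) hlt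
      intro x hx
      simp only [mem_filter, mem_univ, true_and] at hx ⊢
      rw [hj] at hx
      exact ⟨hx.1, fun i hi hij => hx.2 i hij hi⟩)
  cases col with
  | true =>
    left
    exact ⟨f, fun a b h => by simpa [R] using hf a b h⟩
  | false =>
    right
    refine ⟨f, fun a b h => ?_⟩
    rw [SimpleGraph.compl_adj]
    exact ⟨fun e => h.ne (f.injective e), by simpa [R] using hf a b h⟩

end Helpers

/-- For every positive integer `d` there is a constant `c_d` such that every `d`-degenerate
graph `H` on `n ≥ 2` vertices satisfies `r(H) ≤ 2^{c_d √(log n)} · n`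
(logarithm base 2). -/
theorem stmt_11 (d : ℕ) (hd : 1 ≤ d) :
    ∃ c : ℝ, 0 < c ∧ ∀ (W : Type) (_ : Fintype W) (H : SimpleGraph W) (n : ℕ),
      Fintype.card W = n → 2 ≤ n → DDegenerate H d →
      (ramseyNumber H : ℝ) ≤ 2 ^ (c * Real.sqrt (Real.logb 2 n)) * n := by
  obtain ⟨K, hK⟩ : ∃ K : ℕ, K = 2 * (2 * (2 * d + 1) + d + (2 * d + 1) ^ 2) + 2 := ⟨_, rfl⟩
  have hKpos : 0 < K := by omega
  refine ⟨((4 * d * K : ℕ) : ℝ), by positivity, ?_⟩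
  intro W _ H n hW hn hH
  have hn' : (2 : ℝ) ≤ n := by exact_mod_cast hn
  set L := Real.logb 2 n with hL
  have hL1 : 1 ≤ L := by
    rw [hL, Real.le_logb_iff_rpow_le (by norm_num) (by linarith)]
    simpa using hn'
  have hsq1 : 1 ≤ Real.sqrt L := by rw [Real.one_le_sqrt]; exact hL1
  set s := ⌈Real.sqrt L⌉₊ with hs
  have hs1 : Real.sqrt L ≤ s := Nat.le_ceil _
  have hs2 : (s : ℝ) ≤ 2 * Real.sqrt L := by
    have := (Nat.ceil_lt_add_one (Real.sqrt_nonneg L)).le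
    linarith
  have hspos : 1 ≤ s := by
    have : (1 : ℝ) ≤ s := hsq1.trans hs1
    exact_mod_cast this
  have hns : n ≤ 2 ^ (s ^ 2) := by
    have h1 : L ≤ ((s ^ 2 : ℕ) : ℝ) := by
      rw [← Real.sq_sqrt (show 0 ≤ L by linarith)]
      push_cast
      gcongr
    rw [hL, Real.logb_le_iff_le_rpow (by norm_num) (by linarith), Real.rpow_natCast] at h1
    exact_mod_cast h1
  obtain ⟨q, hq⟩ : ∃ q, q = 2 * d * s := ⟨_, rfl⟩
  have hqs : s ≤ q := by rw [hq]; nlinarith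
  have hqd : 2 * d ≤ q := by rw [hq]; nlinarith
  have hqpos : 0 < q := by omega
  have hnq : n ≤ 2 ^ (q ^ 2) := hns.trans (Nat.pow_le_pow_right (by norm_num) (by gcongr))
  have hram : HasRamsey H (n * 2 ^ (K * q)) := by
    refine hasRamsey_of H d q n _ hd hqpos hW hH ?_
    rw [mul_pow n _ q, mul_comm (n ^ q)]
    have hnpos : 0 < n ^ q := by positivity
    refine Nat.mul_lt_mul_of_pos_right ?_ hnpos
    have hND : (n * 2 ^ (K * q)) ^ d ≤ 2 ^ ((q ^ 2 + K * q) * d) := by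
      rw [pow_mul 2 (q ^ 2 + K * q) d, pow_add 2 (q ^ 2) (K * q)]
      gcongr
    refine lt_of_le_of_lt (Nat.mul_le_mul_left _ hND) ?_
    rw [← pow_add, ← pow_add, ← pow_mul]
    refine Nat.pow_lt_pow_right (by norm_num) ?_
    have e1 : K * q * (2 * d) ≤ K * q * q := Nat.mul_le_mul_left _ hqd
    have e2 : K * q * q = (2 * (2 * (2 * d + 1) + d + (2 * d + 1) ^ 2) + 2) * (q * q) := by
      rw [mul_assoc, hK]
    have e3 : 1 ≤ q * q := Nat.mul_pos hqpos hqpos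
    have e4 : (2 * (2 * d + 1)) * 1 ≤ (2 * (2 * d + 1)) * (q * q) := Nat.mul_le_mul_left _ e3
    nlinarith
  have hle : ramseyNumber H ≤ n * 2 ^ (K * q) := Nat.sInf_le hram
  have hle' : (ramseyNumber H : ℝ) ≤ n * 2 ^ (K * q) := by exact_mod_cast hle
  refine hle'.trans ?_
  rw [mul_comm]
  refine mul_le_mul_of_nonneg_right ?_ (by linarith)
  rw [← Real.rpow_natCast]
  refine Real.rpow_le_rpow_of_exponent_le (by norm_num) ?_
  rw [hq]
  push_cast
  have : (K : ℝ) * (2 * d) * s ≤ (K : ℝ) * (2 * d) * (2 * Real.sqrt L) := by gcongr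
  nlinarith
end

section
/- There is a constant c such that every (d,Δ)-degenerate graph H (with d,Δ ≥ 2) with n vertices and chromatic number q satisfies r(H) ≤ (d^d · Δ)^{c log q} · n. More precisely, r(H) ≤ (2^{7d+8} d^{3d+2} Δ)^{log₂ q} · n. -/
open Finset in
open Classical in
noncomputable def backSet {n : ℕ} (H : SimpleGraph (Fin n)) (j : Fin n) (t : ℕ) : Finset (Fin n) :=
  univ.filter (fun k => k.val < t ∧ H.Adj j k)

theorem mem_backSet {n : ℕ} (H : SimpleGraph (Fin n)) (j : Fin n) (t : ℕ) (k : Fin n) :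
    k ∈ backSet H j t ↔ k.val < t ∧ H.Adj j k := by
  classical
  simp [backSet]

theorem backSet_mono {n : ℕ} (H : SimpleGraph (Fin n)) (j : Fin n) {s t : ℕ} (h : s ≤ t) :
    backSet H j s ⊆ backSet H j t := by
  intro k hk
  rw [mem_backSet] at *
  exact ⟨by omega, hk.2⟩

theorem backSet_succ_adj {n : ℕ} (H : SimpleGraph (Fin n)) (j i : Fin n) (h : H.Adj j i) :
    backSet H j (i.val + 1) = insert i (backSet H j i.val) := by
  ext k
  simp only [mem_backSet, Finset.mem_insert, Fin.ext_iff]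
  constructor
  · rintro ⟨h1, h2⟩
    by_cases hk : k.val = i.val
    · left; exact hk
    · right; exact ⟨by omega, h2⟩
  · rintro (hk | ⟨h1, h2⟩)
    · have : k = i := Fin.ext hk
      subst this
      exact ⟨by omega, h⟩
    · exact ⟨by omega, h2⟩

theorem backSet_succ_not_adj {n : ℕ} (H : SimpleGraph (Fin n)) (j i : Fin n) (h : ¬ H.Adj j i) :
    backSet H j (i.val + 1) = backSet H j i.val := by
  ext k
  simp only [mem_backSet]
  constructor
  · rintro ⟨h1, h2⟩
    refine ⟨?_, h2⟩
    by_contra hk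
    have : k = i := Fin.ext (by omega)
    subst this
    exact h h2
  · rintro ⟨h1, h2⟩
    exact ⟨by omega, h2⟩

theorem greedy_steps {n : ℕ} {V : Type*} (Inv : ℕ → (Fin n → V) → Prop)
    (h0 : ∃ φ, Inv 0 φ)
    (step : ∀ (i : Fin n) φ, Inv i.val φ → ∃ x, Inv (i.val + 1) (Function.update φ i x)) :
    ∃ φ, Inv n φ := by
  have : ∀ t, t ≤ n → ∃ φ, Inv t φ := by
    intro t
    induction t with
    | zero => intro _; exact h0
    | succ t ih =>
      intro ht
      obtain ⟨φ, hφ⟩ := ih (by omega)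
      obtain ⟨x, hx⟩ := step ⟨t, by omega⟩ φ hφ
      exact ⟨_, hx⟩
  exact this n le_rfl

/-- partial homomorphism, injective on the first `t` vertices -/
def PartEmb {n : ℕ} {V : Type*} (H : SimpleGraph (Fin n)) (R : V → V → Prop) (t : ℕ)
    (φ : Fin n → V) : Prop :=
  (∀ a b : Fin n, a.val < t → b.val < t → φ a = φ b → a = b) ∧
  (∀ a b : Fin n, a.val < t → b.val < a.val → H.Adj a b → R (φ a) (φ b))

theorem PartEmb.update {n : ℕ} {V : Type*} {H : SimpleGraph (Fin n)} {R : V → V → Prop}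
    {i : Fin n} {φ : Fin n → V} (h : PartEmb H R i.val φ) (x : V)
    (hx : ∀ a : Fin n, a.val < i.val → φ a ≠ x)
    (hR : ∀ b ∈ backSet H i i.val, R x (φ b)) :
    PartEmb H R (i.val + 1) (Function.update φ i x) := by
  have key : ∀ a : Fin n, a.val < i.val → Function.update φ i x a = φ a := by
    intro a ha
    rw [Function.update_of_ne]
    rintro rfl
    omega
  constructor
  · intro a b ha hb hab
    by_cases ha' : a = i
    · by_cases hb' : b = i
      · rw [ha', hb']
      · have hb2 : b.val < i.val := by
          have : b.val ≠ i.val := fun h => hb' (Fin.ext h)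
          omega
        rw [ha', Function.update_self, key b hb2] at hab
        exact absurd hab.symm (hx b hb2)
    · have ha2 : a.val < i.val := by
        have : a.val ≠ i.val := fun h => ha' (Fin.ext h)
        omega
      by_cases hb' : b = i
      · rw [hb', Function.update_self, key a ha2] at hab
        exact absurd hab (hx a ha2)
      · have hb2 : b.val < i.val := by
          have : b.val ≠ i.val := fun h => hb' (Fin.ext h)
          omega
        rw [key a ha2, key b hb2] at hab
        exact h.1 a b ha2 hb2 hab
  · intro a b ha hb hab
    rw [key b (by omega)]
    by_cases ha' : a = i
    · subst ha'
      rw [Function.update_self]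
      exact hR b ((mem_backSet _ _ _ _).2 ⟨hb, hab⟩)
    · have ha2 : a.val < i.val := by
        have : a.val ≠ i.val := fun h => ha' (Fin.ext h)
        omega
      rw [key a ha2]
      exact h.2 a b ha2 hb hab

open Classical in
/-- candidate set -/
noncomputable def candSet {V : Type*} {n : ℕ} (R : V → V → Prop) (U : Finset V)
    (φ : Fin n → V) (S : Finset (Fin n)) : Finset V :=
  U.filter (fun x => ∀ k ∈ S, R x (φ k))

theorem candSet_congr {V : Type*} {n : ℕ} (R : V → V → Prop) (U : Finset V)
    (φ ψ : Fin n → V) (S : Finset (Fin n)) (h : ∀ k ∈ S, φ k = ψ k) :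
    candSet R U φ S = candSet R U ψ S := by
  classical
  unfold candSet
  apply Finset.filter_congr
  intro x _
  constructor
  · intro hx k hk
    rw [← h k hk]; exact hx k hk
  · intro hx k hk
    rw [h k hk]; exact hx k hk

open Classical in
theorem red_embed {n d Δ E : ℕ} {V : Type*} (H : SimpleGraph (Fin n))
    (hd : ∀ j : Fin n, (backSet H j j.val).card ≤ d)
    (hΔ : ∀ i : Fin n, ((Finset.univ.filter (fun j => i < j ∧ H.Adj j i)).image
      (fun j => backSet H j i.val)).card ≤ Δ)
    (hE : 0 < E) (R : V → V → Prop) (hR : ∀ a b, R a b → R b a) (U : Finset V)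
    (hU : 2 * n * E ^ d ≤ U.card) (hn : 0 < n) :
    (∃ φ, PartEmb H R n φ) ∨ ∃ X Y : Finset V, X ⊆ U ∧ Y ⊆ U ∧
      U.card ≤ 2 * Δ * E ^ d * X.card ∧ U.card * E ≤ E ^ d * Y.card ∧
      ∀ x ∈ X, E * (Y.filter (fun y => R x y)).card ≤ Y.card := by
  by_contra hcon
  push Not at hcon
  obtain ⟨hno, hXY⟩ := hcon
  have hEd : 0 < E ^ d := pow_pos hE d
  have hUne : U.Nonempty := by
    rw [← Finset.card_pos]
    have : 0 < 2 * n * E ^ d := by positivity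
    omega
  obtain ⟨u0, _⟩ := hUne
  suffices ∃ φ : Fin n → V, PartEmb H R n φ ∧ ∀ j : Fin n, n ≤ j.val →
      U.card ≤ E ^ (backSet H j n).card * (candSet R U φ (backSet H j n)).card by
    obtain ⟨φ, h, _⟩ := this
    exact hno φ h
  apply greedy_steps (fun t φ => PartEmb H R t φ ∧ ∀ j : Fin n, t ≤ j.val →
      U.card ≤ E ^ (backSet H j t).card * (candSet R U φ (backSet H j t)).card)
  · refine ⟨fun _ => u0, ⟨fun a b h => by omega, fun a b h => by omega⟩, ?_⟩
    intro j _
    have : backSet H j 0 = ∅ := by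
      ext k; simp [mem_backSet]
    rw [this]
    simp [candSet]
  · rintro i φ ⟨hP, hc⟩
    set Ci := candSet R U φ (backSet H i i.val) with hCi
    set F := (Finset.univ.filter (fun j => i < j ∧ H.Adj j i)).image
      (fun j => backSet H j i.val) with hF
    let bad : Finset (Fin n) → Finset V := fun S =>
      Ci.filter (fun x => E * ((candSet R U φ S).filter (fun y => R x y)).card
        ≤ (candSet R U φ S).card)
    have hbad : ∀ S ∈ F, 2 * Δ * E ^ d * (bad S).card ≤ U.card := by
      intro S hS
      rw [hF, Finset.mem_image] at hS
      obtain ⟨j, hj, rfl⟩ := hS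
      rw [Finset.mem_filter] at hj
      obtain ⟨-, hij, hadj⟩ := hj
      by_contra hlt
      push Not at hlt
      have hYc : U.card * E ≤ E ^ d * (candSet R U φ (backSet H j i.val)).card := by
        have h1 := hc j (by exact_mod_cast hij.le)
        have h2 : (backSet H j i.val).card + 1 ≤ d := by
          refine le_trans ?_ (hd j)
          rw [← Finset.card_insert_of_notMem (a := i), ← backSet_succ_adj H j i hadj]
          · exact Finset.card_le_card (backSet_mono H j (by exact_mod_cast hij))
          · simp [mem_backSet]
        calc U.card * E ≤ (E ^ (backSet H j i.val).card *
              (candSet R U φ (backSet H j i.val)).card) * E := Nat.mul_le_mul_right _ h1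
          _ = E ^ ((backSet H j i.val).card + 1) *
              (candSet R U φ (backSet H j i.val)).card := by ring
          _ ≤ _ := Nat.mul_le_mul_right _ (Nat.pow_le_pow_right hE h2)
      obtain ⟨x, hx, hx2⟩ := hXY (bad (backSet H j i.val)) (candSet R U φ (backSet H j i.val))
        ((Finset.filter_subset _ _).trans (Finset.filter_subset _ _))
        (Finset.filter_subset _ _) hlt.le hYc
      have := (Finset.mem_filter.1 hx).2
      omega
    set used : Finset V := (Finset.univ.filter (fun k : Fin n => k.val < i.val)).image φ with hused
    have hucard : used.card < n := by
      refine lt_of_le_of_lt Finset.card_image_le ?_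
      calc (Finset.univ.filter (fun k : Fin n => k.val < i.val)).card
          < (Finset.univ : Finset (Fin n)).card := by
            apply Finset.card_lt_card
            rw [Finset.filter_ssubset]
            exact ⟨i, Finset.mem_univ _, by omega⟩
        _ = n := by simp
    have hbadU : 2 * E ^ d * (F.biUnion bad).card ≤ U.card := by
      rcases Nat.eq_zero_or_pos Δ with h0 | hpos
      · have hF0 : F = ∅ := by
          rw [← Finset.card_eq_zero]
          have hFc : F.card ≤ Δ := hΔ i
          omega
        rw [hF0]; simp
      · have h1 : (F.biUnion bad).card ≤ ∑ S ∈ F, (bad S).card := Finset.card_biUnion_le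
        have h2 : ∑ S ∈ F, 2 * Δ * E ^ d * (bad S).card ≤ F.card * U.card := by
          have := Finset.sum_le_card_nsmul F _ _ hbad
          simpa using this
        rw [← Finset.mul_sum] at h2
        have h3 : F.card * U.card ≤ Δ * U.card := Nat.mul_le_mul_right _ (hΔ i)
        have h4 := Nat.mul_le_mul_left (2 * Δ * E ^ d) h1
        apply Nat.le_of_mul_le_mul_left _ hpos
        calc Δ * (2 * E ^ d * (F.biUnion bad).card) = 2 * Δ * E ^ d * (F.biUnion bad).card := by ring
          _ ≤ _ := h4.trans (h2.trans h3)
    have hCicard : U.card ≤ E ^ d * Ci.card :=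
      (hc i le_rfl).trans (Nat.mul_le_mul_right _ (Nat.pow_le_pow_right hE (hd i)))
    have hlt : (F.biUnion bad ∪ used).card < Ci.card := by
      refine lt_of_le_of_lt (Finset.card_union_le _ _) ?_
      have h1 : E ^ d * used.card < E ^ d * n := Nat.mul_lt_mul_of_pos_left hucard hEd
      apply Nat.lt_of_mul_lt_mul_left (a := 2 * E ^ d)
      nlinarith
    obtain ⟨x, hxC, hxn⟩ := Finset.exists_mem_notMem_of_card_lt_card hlt
    rw [Finset.mem_union, not_or] at hxn
    obtain ⟨hxb, hxu⟩ := hxn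
    have hxC' := hxC
    rw [hCi, candSet, Finset.mem_filter] at hxC'
    refine ⟨x, hP.update x ?_ hxC'.2, ?_⟩
    · intro a ha hax
      apply hxu
      rw [hused, Finset.mem_image]
      exact ⟨a, by simpa using ha, hax⟩
    · intro j hj
      have hij : i < j := by
        rw [Fin.lt_def]; omega
      have hcj := hc j (by omega)
      have hcongr : candSet R U (Function.update φ i x) (backSet H j i.val) =
          candSet R U φ (backSet H j i.val) := by
        apply candSet_congr
        intro k hk
        rw [mem_backSet] at hk
        rw [Function.update_of_ne]
        rintro rfl
        omega
      by_cases hadj : H.Adj j i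
      · rw [backSet_succ_adj H j i hadj, Finset.card_insert_of_notMem (by simp [mem_backSet])]
        have hS : backSet H j i.val ∈ F := by
          rw [hF, Finset.mem_image]
          exact ⟨j, by simp [hij, hadj], rfl⟩
        have hnb : ¬ (E * ((candSet R U φ (backSet H j i.val)).filter (fun y => R x y)).card
            ≤ (candSet R U φ (backSet H j i.val)).card) := by
          intro hle
          apply hxb
          rw [Finset.mem_biUnion]
          exact ⟨_, hS, Finset.mem_filter.2 ⟨hxC, hle⟩⟩
        have heq : (candSet R U φ (backSet H j i.val)).filter (fun y => R x y) ⊆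
            candSet R U (Function.update φ i x) (insert i (backSet H j i.val)) := by
          rw [← hcongr]
          intro y hy
          simp only [candSet, Finset.mem_filter, Finset.mem_insert] at hy ⊢
          refine ⟨hy.1.1, ?_⟩
          rintro k (rfl | hk)
          · rw [Function.update_self]; exact hR _ _ hy.2
          · exact hy.1.2 k hk
        have hle := Finset.card_le_card heq
        push Not at hnb
        calc U.card ≤ _ := hcj
          _ ≤ E ^ (backSet H j i.val).card * (E * (candSet R U (Function.update φ i x)
            (insert i (backSet H j i.val))).card) :=
              Nat.mul_le_mul_left _ (hnb.le.trans (Nat.mul_le_mul_left _ hle))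
          _ = _ := by ring
      · rw [backSet_succ_not_adj H j i hadj, hcongr]
        exact hcj

open Classical in
/-- number of `R`-pairs between `A` and `B` -/
noncomputable def ePairs {V : Type*} (R : V → V → Prop) (A B : Finset V) : ℕ :=
  ∑ x ∈ A, (B.filter (fun y => R x y)).card

open Classical in
theorem ePairs_comm {V : Type*} (R : V → V → Prop) (hR : ∀ a b, R a b → R b a)
    (A B : Finset V) : ePairs R A B = ePairs R B A := by
  unfold ePairs
  have h := Finset.sum_card_bipartiteAbove_eq_sum_card_bipartiteBelow (s := A) (t := B) R
  simp only [Finset.bipartiteAbove, Finset.bipartiteBelow] at h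
  rw [h]
  apply Finset.sum_congr rfl
  intro x _
  congr 1
  apply Finset.filter_congr
  intro y _
  exact ⟨hR _ _, hR _ _⟩

theorem ePairs_mono_right {V : Type*} (R : V → V → Prop) (A : Finset V) {B C : Finset V}
    (h : B ⊆ C) : ePairs R A B ≤ ePairs R A C := by
  classical
  unfold ePairs
  apply Finset.sum_le_sum
  intro x _
  exact Finset.card_le_card (Finset.filter_subset_filter _ h)

/-- any large subset contains `q` disjoint parts of size `m` with few `R`-pairs between them -/
def HasParts {V : Type*} (R : V → V → Prop) (E Q m q s : ℕ) : Prop :=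
  ∀ U : Finset V, s ≤ U.card → ∃ A : ℕ → Finset V,
    (∀ i, i < q → A i ⊆ U ∧ (A i).card = m) ∧
    (∀ i j, i < q → j < q → i ≠ j → Disjoint (A i) (A j) ∧
      E * ePairs R (A i) (A j) ≤ Q * m ^ 2)

theorem HasParts.mono {V : Type*} {R : V → V → Prop} {E Q m q s t : ℕ}
    (h : HasParts R E Q m q s) (hst : s ≤ t) : HasParts R E Q m q t :=
  fun U hU => h U (hst.trans hU)

theorem hasParts_one {V : Type*} (R : V → V → Prop) (E Q m : ℕ) : HasParts R E Q m 1 m := by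
  intro U hU
  obtain ⟨A, hA, hc⟩ := Finset.exists_subset_card_eq hU
  refine ⟨fun _ => A, fun i _ => ⟨hA, hc⟩, ?_⟩
  intro i j hi hj hij
  omega

open Classical in
theorem hasParts_add {n d Δ E Q m q1 q2 s1 s2 s : ℕ} {V : Type*} (H : SimpleGraph (Fin n))
    (hd : ∀ j : Fin n, (backSet H j j.val).card ≤ d)
    (hΔ : ∀ i : Fin n, ((Finset.univ.filter (fun j => i < j ∧ H.Adj j i)).image
      (fun j => backSet H j i.val)).card ≤ Δ)
    (hE : 2 ≤ E) (hΔ1 : 1 ≤ Δ) (R : V → V → Prop) (hR : ∀ a b, R a b → R b a)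
    (hno : ¬ ∃ φ, PartEmb H R n φ) (hn : 0 < n)
    (hm : 0 < m) (hq1 : 0 < q1) (hQ : 2 * q1 ≤ Q)
    (h1 : HasParts R E Q m q1 s1) (h2 : HasParts R E Q m q2 s2)
    (hns : n ≤ s1)
    (hs1 : 2 * E ^ d * Δ * s1 ≤ s) (hs2 : 2 * E ^ d * s2 ≤ s) :
    HasParts R E Q m (q1 + q2) s := by
  intro U hU
  have hEd : 0 < E ^ d := pow_pos (by omega) d
  have hUn : 2 * n * E ^ d ≤ U.card := by
    calc 2 * n * E ^ d = 2 * E ^ d * 1 * n := by ring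
      _ ≤ 2 * E ^ d * Δ * s1 := by gcongr
      _ ≤ _ := hs1.trans hU
  rcases red_embed H hd hΔ (by omega) R hR U hUn hn with h | ⟨X, Y, hXU, hYU, hX, hY, hXY⟩
  · exact absurd h hno
  have hXs : s1 ≤ X.card := by
    have : 2 * E ^ d * Δ * s1 ≤ 2 * E ^ d * Δ * X.card := by
      calc _ ≤ U.card := hs1.trans hU
        _ ≤ _ := hX
        _ = _ := by ring
    exact Nat.le_of_mul_le_mul_left this (by positivity)
  obtain ⟨X', hX'X, hX'c⟩ := Finset.exists_subset_card_eq hXs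
  obtain ⟨A, hA1, hA2⟩ := h1 X' hX'c.ge
  set AA := (Finset.range q1).biUnion A with hAA
  have hAAX : AA ⊆ X' := by
    rw [hAA, Finset.biUnion_subset]
    intro i hi
    exact (hA1 i (Finset.mem_range.1 hi)).1
  have hAAc : AA.card = q1 * m := by
    rw [hAA, Finset.card_biUnion]
    · rw [Finset.sum_congr rfl (fun i hi => (hA1 i (Finset.mem_range.1 hi)).2)]
      simp
    · intro i hi j hj hij
      exact (hA2 i j (Finset.mem_range.1 hi) (Finset.mem_range.1 hj) hij).1
  have hAAs : AA.card ≤ s1 := hX'c ▸ Finset.card_le_card hAAX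
  have hAApos : 0 < AA.card := by rw [hAAc]; positivity
  have hYs1 : 4 * s1 ≤ Y.card := by
    have : E ^ d * (4 * s1) ≤ E ^ d * Y.card := by
      calc E ^ d * (4 * s1) = 2 * E ^ d * 1 * s1 * 2 := by ring
        _ ≤ 2 * E ^ d * Δ * s1 * E := by gcongr
        _ ≤ U.card * E := Nat.mul_le_mul_right _ (hs1.trans hU)
        _ ≤ _ := hY
    exact Nat.le_of_mul_le_mul_left this hEd
  have hYs2 : 4 * s2 ≤ Y.card := by
    have : E ^ d * (4 * s2) ≤ E ^ d * Y.card := by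
      calc E ^ d * (4 * s2) = 2 * E ^ d * s2 * 2 := by ring
        _ ≤ 2 * E ^ d * s2 * E := by gcongr
        _ ≤ U.card * E := Nat.mul_le_mul_right _ (hs2.trans hU)
        _ ≤ _ := hY
    exact Nat.le_of_mul_le_mul_left this hEd
  set Z := Y.filter (fun y => 2 * AA.card < E * (AA.filter (fun a => R y a)).card) with hZ
  have hEsum : E * ePairs R AA Y ≤ AA.card * Y.card := by
    unfold ePairs
    rw [Finset.mul_sum]
    have := Finset.sum_le_card_nsmul AA
      (fun x => E * (Y.filter (fun y => R x y)).card) Y.card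
      (fun x hx => hXY x (hX'X (hAAX hx)))
    simpa using this
  have hZc : 2 * Z.card ≤ Y.card := by
    have h3 : Z.card * (2 * AA.card) ≤ E * ePairs R Y AA := by
      unfold ePairs
      rw [Finset.mul_sum]
      calc Z.card * (2 * AA.card) ≤ ∑ y ∈ Z, E * (AA.filter (fun a => R y a)).card := by
            have := Finset.card_nsmul_le_sum Z
              (fun y => E * (AA.filter (fun a => R y a)).card) (2 * AA.card)
              (fun y hy => (Finset.mem_filter.1 hy).2.le)
            simpa using this
        _ ≤ _ := Finset.sum_le_sum_of_subset (Finset.filter_subset _ _)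
    rw [ePairs_comm R hR] at h3
    have h4 := h3.trans hEsum
    apply Nat.le_of_mul_le_mul_left _ hAApos
    calc AA.card * (2 * Z.card) = Z.card * (2 * AA.card) := by ring
      _ ≤ _ := h4
  set Y' := Y \ (Z ∪ AA) with hY'
  have hY'c : s2 ≤ Y'.card := by
    have h5 : Y.card - (Z ∪ AA).card ≤ Y'.card := Finset.le_card_sdiff _ _
    have h6 := Finset.card_union_le Z AA
    omega
  obtain ⟨B, hB1, hB2⟩ := h2 Y' hY'c
  have cross : ∀ i j, i < q1 → j < q2 → Disjoint (A i) (B j) ∧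
      E * ePairs R (A i) (B j) ≤ Q * m ^ 2 := by
    intro i j hi hj
    have hAi : A i ⊆ AA := Finset.subset_biUnion_of_mem A (Finset.mem_range.2 hi)
    refine ⟨?_, ?_⟩
    · rw [Finset.disjoint_left]
      intro x hx hx2
      have := (hB1 j hj).1 hx2
      rw [hY', Finset.mem_sdiff, Finset.mem_union] at this
      exact this.2 (Or.inr (hAi hx))
    · rw [ePairs_comm R hR]
      refine le_trans (Nat.mul_le_mul_left _ (ePairs_mono_right R (B j) hAi)) ?_
      unfold ePairs
      rw [Finset.mul_sum]
      have := Finset.sum_le_card_nsmul (B j)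
        (fun y => E * (AA.filter (fun a => R y a)).card) (2 * AA.card) ?_
      · refine this.trans ?_
        rw [(hB1 j hj).2, hAAc, smul_eq_mul]
        calc m * (2 * (q1 * m)) = 2 * q1 * m ^ 2 := by ring
          _ ≤ _ := Nat.mul_le_mul_right _ hQ
      · intro y hy
        have hyY := (hB1 j hj).1 hy
        rw [hY', Finset.mem_sdiff, Finset.mem_union, not_or] at hyY
        by_contra hlt
        push Not at hlt
        exact hyY.2.1 (Finset.mem_filter.2 ⟨hyY.1, hlt⟩)
  refine ⟨fun i => if i < q1 then A i else B (i - q1), ?_, ?_⟩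
  · intro i hi
    by_cases hi1 : i < q1
    · simp only [hi1, if_true]
      exact ⟨(hA1 i hi1).1.trans (hX'X.trans hXU), (hA1 i hi1).2⟩
    · simp only [hi1, if_false]
      have := hB1 (i - q1) (by omega)
      exact ⟨this.1.trans (Finset.sdiff_subset.trans hYU), this.2⟩
  · intro i j hi hj hij
    by_cases hi1 : i < q1 <;> by_cases hj1 : j < q1 <;> simp only [hi1, hj1, if_true, if_false]
    · exact hA2 i j hi1 hj1 hij
    · exact cross i (j - q1) hi1 (by omega)
    · have := cross j (i - q1) hj1 (by omega)
      rw [ePairs_comm R hR]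
      exact ⟨this.1.symm, this.2⟩
    · exact hB2 _ _ (by omega) (by omega) (by omega)

open Classical in
theorem hasParts_all {n d Δ E Q m : ℕ} {V : Type*} (H : SimpleGraph (Fin n))
    (hd : ∀ j : Fin n, (backSet H j j.val).card ≤ d)
    (hΔ : ∀ i : Fin n, ((Finset.univ.filter (fun j => i < j ∧ H.Adj j i)).image
      (fun j => backSet H j i.val)).card ≤ Δ)
    (hE : 2 ≤ E) (hΔ1 : 1 ≤ Δ) (R : V → V → Prop) (hR : ∀ a b, R a b → R b a)
    (hno : ¬ ∃ φ, PartEmb H R n φ) (hn : 0 < n) (hm : n ≤ m) (h : ℕ) :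
    (∀ q, 0 < q → q ≤ Q → q ≤ 2 ^ h → HasParts R E Q m q ((2 * E ^ d) ^ h * Δ ^ h * m)) ∧
    (∀ q, 0 < q → q ≤ Q → q < 2 ^ h → HasParts R E Q m q ((2 * E ^ d) ^ h * Δ ^ (h - 1) * m)) := by
  have hEd : 0 < E ^ d := pow_pos (by omega) d
  have big : ∀ a b : ℕ, m ≤ (2 * E ^ d) ^ a * Δ ^ b * m := by
    intro a b
    apply Nat.le_mul_of_pos_left
    positivity
  induction h with
  | zero =>
    constructor
    · intro q hq _ hq2
      have : q = 1 := by
        simp at hq2; omega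
      subst this
      exact (hasParts_one R E Q m).mono (big _ _)
    · intro q hq _ hq2
      simp at hq2; omega
  | succ h ih =>
    constructor
    · intro q hq hqQ hq2
      rcases Nat.lt_or_ge q 2 with hlt | hge
      · have : q = 1 := by omega
        subst this
        exact (hasParts_one R E Q m).mono (big _ _)
      · rw [pow_succ] at hq2
        have e : q = q / 2 + (q - q / 2) := by omega
        rw [e]
        refine hasParts_add H hd hΔ hE hΔ1 R hR hno hn (by omega) (by omega) (by omega)
          (ih.1 (q / 2) (by omega) (by omega) (by omega))
          (ih.1 (q - q / 2) (by omega) (by omega) (by omega)) (hm.trans (big _ _)) ?_ ?_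
        · apply le_of_eq; ring
        · calc 2 * E ^ d * ((2 * E ^ d) ^ h * Δ ^ h * m)
              = (2 * E ^ d) ^ (h + 1) * Δ ^ h * m := by ring
            _ ≤ _ := by
              gcongr
              · omega
    · intro q hq hqQ hq2
      rcases Nat.lt_or_ge q 2 with hlt | hge
      · have : q = 1 := by omega
        subst this
        exact (hasParts_one R E Q m).mono (big _ _)
      · rw [pow_succ] at hq2
        have e : q = q / 2 + (q - q / 2) := by omega
        have hh : 1 ≤ h := by
          rcases Nat.eq_zero_or_pos h with h0 | h0
          · subst h0; omega
          · exact h0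
        rw [e]
        refine hasParts_add H hd hΔ hE hΔ1 R hR hno hn (by omega) (by omega) (by omega)
          (ih.2 (q / 2) (by omega) (by omega) (by omega))
          (ih.1 (q - q / 2) (by omega) (by omega) (by omega)) (hm.trans (big _ _)) ?_ ?_
        · obtain ⟨k, rfl⟩ : ∃ k, h = k + 1 := ⟨h - 1, by omega⟩
          simp only [Nat.add_sub_cancel]
          apply le_of_eq; ring
        · simp only [Nat.add_sub_cancel]
          apply le_of_eq; ring

open Classical in
theorem blue_embed {n d E q : ℕ} {V : Type*} (H : SimpleGraph (Fin n))
    (hd : ∀ j : Fin n, (backSet H j j.val).card ≤ d) (hd1 : 1 ≤ d) (hn : 0 < n) (hq : 0 < q)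
    (hE : E = 8 * d * q ^ 2) (col : Fin n → ℕ) (hcol : ∀ a, col a < q)
    (hcol2 : ∀ a b, H.Adj a b → col a ≠ col b)
    (R : V → V → Prop) (hR : ∀ a b, R a b → R b a) (A : ℕ → Finset V)
    (hA1 : ∀ i, i < q → (A i).card = 4 * n)
    (hA2 : ∀ i j, i < q → j < q → i ≠ j → 
      E * ePairs R (A i) (A j) ≤ q * (4 * n) ^ 2) :
    ∃ φ, PartEmb H (fun a b => ¬ R a b) n φ := by
  let rdeg : ℕ → V → ℕ := fun i x =>
    ∑ j ∈ (Finset.range q).erase i, ((A j).filter (fun y => R x y)).card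
  let good : ℕ → Finset V := fun i => (A i).filter (fun x => d * rdeg i x ≤ n)
  have hgood : ∀ i, i < q → 2 * n ≤ (good i).card := by
    intro i hi
    have hsum : E * ∑ x ∈ A i, rdeg i x ≤ q * (q * (4 * n) ^ 2) := by
      have : ∑ x ∈ A i, rdeg i x = ∑ j ∈ (Finset.range q).erase i, ePairs R (A i) (A j) := by
        simp only [rdeg, ePairs]
        rw [Finset.sum_comm]
      rw [this, Finset.mul_sum]
      refine (Finset.sum_le_card_nsmul _ _ (q * (4 * n) ^ 2) ?_).trans ?_
      · intro j hj
        rw [Finset.mem_erase, Finset.mem_range] at hj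
        exact hA2 i j hi hj.2 (Ne.symm hj.1)
      · rw [smul_eq_mul]
        apply Nat.mul_le_mul_right
        refine (Finset.card_le_card (Finset.erase_subset _ _)).trans ?_
        simp
    have hbad : ((A i).filter (fun x => ¬ d * rdeg i x ≤ n)).card * n ≤
        d * ∑ x ∈ A i, rdeg i x := by
      rw [Finset.mul_sum]
      calc _ ≤ ∑ x ∈ (A i).filter (fun x => ¬ d * rdeg i x ≤ n), d * rdeg i x := by
            have := Finset.card_nsmul_le_sum ((A i).filter (fun x => ¬ d * rdeg i x ≤ n))
              (fun x => d * rdeg i x) n (fun x hx => (not_le.1 (Finset.mem_filter.1 hx).2).le)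
            simpa using this
        _ ≤ _ := Finset.sum_le_sum_of_subset (Finset.filter_subset _ _)
    have hs := Finset.card_filter_add_card_filter_not (s := A i) (fun x => d * rdeg i x ≤ n)
    rw [hA1 i hi] at hs
    set b := ((A i).filter (fun x => ¬ d * rdeg i x ≤ n)).card with hb
    have hb2 : b ≤ 2 * n := by
      have h1 : 8 * q ^ 2 * (b * n) ≤ q * (q * (4 * n) ^ 2) := by
        calc 8 * q ^ 2 * (b * n) ≤ 8 * q ^ 2 * (d * ∑ x ∈ A i, rdeg i x) :=
              Nat.mul_le_mul_left _ hbad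
          _ = E * ∑ x ∈ A i, rdeg i x := by rw [hE]; ring
          _ ≤ _ := hsum
      refine le_of_mul_le_mul_left (a := 8 * q ^ 2 * n) ?_ (by positivity)
      calc 8 * q ^ 2 * n * b = 8 * q ^ 2 * (b * n) := by ring
        _ ≤ _ := h1
        _ = _ := by ring
    have : (good i).card + b = 4 * n := hs
    omega
  have hne : Nonempty V := by
    have h1 := hgood 0 hq
    have : (good 0).Nonempty := by
      rw [← Finset.card_pos]; omega
    exact ⟨this.choose⟩
  suffices ∃ φ : Fin n → V, PartEmb H (fun a b => ¬ R a b) n φ ∧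
      ∀ j : Fin n, j.val < n → φ j ∈ good (col j) by
    obtain ⟨φ, h, _⟩ := this
    exact ⟨φ, h⟩
  apply greedy_steps (fun t φ => PartEmb H (fun a b => ¬ R a b) t φ ∧
      ∀ j : Fin n, j.val < t → φ j ∈ good (col j))
  · refine ⟨fun _ => hne.some, ⟨fun a b h => by omega, fun a b h => by omega⟩, ?_⟩
    intro j hj; omega
  · rintro i φ ⟨hP, hc⟩
    set used : Finset V := (Finset.univ.filter (fun k : Fin n => k.val < i.val)).image φ with hused
    have hucard : used.card < n := by
      refine lt_of_le_of_lt Finset.card_image_le ?_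
      calc (Finset.univ.filter (fun k : Fin n => k.val < i.val)).card
          < (Finset.univ : Finset (Fin n)).card := by
            apply Finset.card_lt_card
            rw [Finset.filter_ssubset]
            exact ⟨i, Finset.mem_univ _, by omega⟩
        _ = n := by simp
    set forb : Finset V := (backSet H i i.val).biUnion
      (fun k => (A (col i)).filter (fun y => R (φ k) y)) with hforb
    have hfcard : forb.card ≤ n := by
      have h1 : forb.card ≤ ∑ k ∈ backSet H i i.val,
          ((A (col i)).filter (fun y => R (φ k) y)).card := Finset.card_biUnion_le
      have h2 : ∑ k ∈ backSet H i i.val, d * ((A (col i)).filter (fun y => R (φ k) y)).card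
          ≤ d * n := by
        refine (Finset.sum_le_card_nsmul _ _ n ?_).trans ?_
        · intro k hk
          rw [mem_backSet] at hk
          have hk2 := (Finset.mem_filter.1 (hc k hk.1)).2
          refine le_trans (Nat.mul_le_mul_left _ ?_) hk2
          simp only [rdeg]
          apply Finset.single_le_sum
            (f := fun j => ((A j).filter (fun y => R (φ k) y)).card) (fun _ _ => Nat.zero_le _)
          rw [Finset.mem_erase, Finset.mem_range]
          exact ⟨hcol2 _ _ hk.2, hcol i⟩
        · rw [smul_eq_mul]
          exact Nat.mul_le_mul_right _ (hd i)
      rw [← Finset.mul_sum] at h2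
      exact h1.trans (Nat.le_of_mul_le_mul_left h2 hd1)
    have hlt : (forb ∪ used).card < (good (col i)).card := by
      have h1 := Finset.card_union_le forb used
      have h2 := hgood (col i) (hcol i)
      omega
    obtain ⟨x, hxC, hxn⟩ := Finset.exists_mem_notMem_of_card_lt_card hlt
    rw [Finset.mem_union, not_or] at hxn
    obtain ⟨hxb, hxu⟩ := hxn
    refine ⟨x, hP.update x ?_ ?_, ?_⟩
    · intro a ha hax
      apply hxu
      rw [hused, Finset.mem_image]
      exact ⟨a, by simpa using ha, hax⟩
    · intro b hb hRb
      apply hxb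
      rw [hforb, Finset.mem_biUnion]
      exact ⟨b, hb, Finset.mem_filter.2 ⟨(Finset.mem_filter.1 hxC).1, hR _ _ hRb⟩⟩
    · intro j hj
      by_cases hji : j = i
      · subst hji
        rw [Function.update_self]; exact hxC
      · rw [Function.update_of_ne hji]
        apply hc
        have : j.val ≠ i.val := fun h => hji (Fin.ext h)
        omega

/-- greedy colouring -/
theorem greedy_color {n d : ℕ} (H : SimpleGraph (Fin n))
    (hd : ∀ j : Fin n, (backSet H j j.val).card ≤ d) : H.Colorable (d + 1) := by
  classical
  obtain ⟨φ, hφ⟩ := greedy_steps (n := n) (V := Fin (d + 1))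
    (fun t φ => ∀ a b : Fin n, a.val < t → b.val < a.val → H.Adj a b → φ a ≠ φ b)
    ⟨fun _ => 0, fun a b h => by omega⟩ (by
      intro i φ h
      have hlt : ((backSet H i i.val).image φ).card < (Finset.univ : Finset (Fin (d + 1))).card := by
        refine lt_of_le_of_lt (Finset.card_image_le.trans (hd i)) ?_
        simp
      obtain ⟨x, _, hx⟩ := Finset.exists_mem_notMem_of_card_lt_card hlt
      refine ⟨x, ?_⟩
      intro a b ha hb hab
      have hbi : b ≠ i := by rintro rfl; omega
      rw [Function.update_of_ne hbi]
      by_cases hai : a = i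
      · subst hai
        rw [Function.update_self]
        rintro rfl
        exact hx (Finset.mem_image_of_mem _ ((mem_backSet _ _ _ _).2 ⟨hb, hab⟩))
      · rw [Function.update_of_ne hai]
        have : a.val ≠ i.val := fun h => hai (Fin.ext h)
        exact h a b (by omega) hb hab)
  refine ⟨SimpleGraph.Coloring.mk φ ?_⟩
  intro a b hab
  rcases Nat.lt_trichotomy a.val b.val with h | h | h
  · exact (hφ b a b.2 h hab.symm).symm
  · exact absurd (Fin.ext h) hab.ne
  · exact hφ a b a.2 h hab

theorem PartEmb.embedding {n : ℕ} {V : Type*} {H : SimpleGraph (Fin n)} {R : V → V → Prop}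
    (hR : ∀ a b, R a b → R b a) {φ : Fin n → V} (h : PartEmb H R n φ) :
    Function.Injective φ ∧ ∀ a b, H.Adj a b → R (φ a) (φ b) := by
  refine ⟨fun a b hab => h.1 a b a.2 b.2 hab, ?_⟩
  intro a b hab
  rcases Nat.lt_trichotomy a.val b.val with h' | h' | h'
  · exact hR _ _ (h.2 b a b.2 h' hab.symm)
  · exact absurd (Fin.ext h') hab.ne
  · exact h.2 a b a.2 h' hab

open Classical in
theorem hasRamsey_fin {n d Δ q h N : ℕ} (H : SimpleGraph (Fin n))
    (hd : ∀ j : Fin n, (backSet H j j.val).card ≤ d)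
    (hΔ : ∀ i : Fin n, ((Finset.univ.filter (fun j => i < j ∧ H.Adj j i)).image
      (fun j => backSet H j i.val)).card ≤ Δ)
    (hd1 : 1 ≤ d) (hΔ1 : 1 ≤ Δ) (hn : 0 < n) (hq : 0 < q) (hc : H.Colorable q)
    (hN : (q ≤ 2 ^ h ∧ (2 * (8 * d * q ^ 2) ^ d) ^ h * Δ ^ h * (4 * n) ≤ N) ∨
      (q < 2 ^ h ∧ (2 * (8 * d * q ^ 2) ^ d) ^ h * Δ ^ (h - 1) * (4 * n) ≤ N)) :
    HasRamsey H N := by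
  intro C
  by_cases hred : ∃ φ, PartEmb H C.Adj n φ
  · left
    obtain ⟨φ, hφ⟩ := hred
    have := hφ.embedding (fun a b h => h.symm)
    exact ⟨⟨φ, this.1⟩, this.2⟩
  · right
    have hE : 2 ≤ 8 * d * q ^ 2 := by
      have : 1 ≤ d * q ^ 2 := Nat.mul_pos hd1 (by positivity)
      nlinarith
    have hall := hasParts_all (Q := q) (m := 4 * n) H hd hΔ hE hΔ1 C.Adj (fun a b h => h.symm)
      hred hn (by omega) h
    have hparts : HasParts C.Adj (8 * d * q ^ 2) q (4 * n) q N := by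
      rcases hN with ⟨h1, h2⟩ | ⟨h1, h2⟩
      · exact (hall.1 q hq le_rfl h1).mono h2
      · exact (hall.2 q hq le_rfl h1).mono h2
    obtain ⟨A, hA1, hA2⟩ := hparts Finset.univ (by simp)
    obtain ⟨c⟩ := hc
    obtain ⟨φ, hφ⟩ := blue_embed H hd hd1 hn hq rfl (fun a => (c a).val) (fun a => (c a).2)
      (fun a b hab h => c.valid hab (Fin.ext h)) C.Adj (fun a b h => h.symm) A
      (fun i hi => (hA1 i hi).2) (fun i j hi hj hij => (hA2 i j hi hj hij).2)
    have := hφ.embedding (fun a b h h' => h h'.symm)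
    refine ⟨⟨φ, this.1⟩, ?_⟩
    intro a b hab
    rw [SimpleGraph.compl_adj]
    exact ⟨fun h => hab.ne (this.1 h), this.2 a b hab⟩

open Classical in
theorem ramsey_le_nat {W : Type*} [Fintype W] (H : SimpleGraph W) {d Δ q n h N : ℕ}
    (hdeg : DDeltaDegenerate H d Δ) (hd1 : 1 ≤ d) (hΔ1 : 1 ≤ Δ) (hcard : Fintype.card W = n)
    (hn : 0 < n) (hq : 0 < q) (hchr : H.chromaticNumber = (q : ℕ∞)) :
    q ≤ d + 1 ∧ ((q ≤ 2 ^ h ∧ (2 * (8 * d * q ^ 2) ^ d) ^ h * Δ ^ h * (4 * n) ≤ N) ∨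
      (q < 2 ^ h ∧ (2 * (8 * d * q ^ 2) ^ d) ^ h * Δ ^ (h - 1) * (4 * n) ≤ N) →
    ramseyNumber H ≤ N) := by
  subst hcard
  obtain ⟨f, hf⟩ := hdeg
  set G : SimpleGraph (Fin (Fintype.card W)) := H.comap f with hG
  have hadj : ∀ a b, G.Adj a b ↔ H.Adj (f a) (f b) := fun a b => Iff.rfl
  have hd : ∀ j, (backSet G j j.val).card ≤ d := by
    intro j
    refine le_trans (le_of_eq ?_) (hf j).1
    rw [← Set.ncard_coe_finset]
    congr 1
    ext k
    simp only [Finset.mem_coe, mem_backSet, Set.mem_ofPred_eq, hadj, Fin.lt_def]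
    rw [SimpleGraph.adj_comm]
  have hΔ : ∀ i, ((Finset.univ.filter (fun j => i < j ∧ G.Adj j i)).image
      (fun j => backSet G j i.val)).card ≤ Δ := by
    intro i
    refine le_trans ?_ (hf i).2
    rw [← Set.ncard_coe_finset]
    let g : Set W → Finset (Fin (Fintype.card W)) := fun S =>
      Finset.univ.filter (fun k => k < i ∧ f k ∈ S)
    refine le_trans (Set.ncard_le_ncard (t := Set.image g {S : Set W | ∃ j : Fin (Fintype.card W),
      i < j ∧ H.Adj (f j) (f i) ∧ S = {v : W | H.Adj (f j) v ∧ f.symm v ≤ i}}) ?_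
        (Set.toFinite _)) (Set.ncard_image_le (Set.toFinite _))
    intro S hS
    simp only [Finset.coe_image, Set.mem_image, Finset.mem_coe, Finset.mem_filter,
      Finset.mem_univ, true_and] at hS
    obtain ⟨j, ⟨hij, hji⟩, rfl⟩ := hS
    refine ⟨_, ⟨j, hij, hji, rfl⟩, ?_⟩
    ext k
    simp only [g, Finset.mem_filter, Finset.mem_univ, true_and, mem_backSet, Set.mem_ofPred_eq,
      Equiv.symm_apply_apply, hadj, Fin.lt_def, Fin.le_def]
    constructor
    · rintro ⟨h1, h2, h3⟩; exact ⟨h1, h2⟩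
    · rintro ⟨h1, h2⟩; exact ⟨h1, h2, h1.le⟩
  have toH : ∀ k, G.Colorable k → H.Colorable k := by
    rintro k ⟨c⟩
    refine ⟨SimpleGraph.Coloring.mk (fun w => c (f.symm w)) ?_⟩
    intro a b hab
    apply c.valid
    rw [hadj]; simpa using hab
  have hHq : H.Colorable q := SimpleGraph.chromaticNumber_le_iff_colorable.1 hchr.le
  have hGq : G.Colorable q := by
    obtain ⟨c⟩ := hHq
    refine ⟨SimpleGraph.Coloring.mk (fun w => c (f w)) ?_⟩
    intro a b hab
    exact c.valid hab
  constructor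
  · have := SimpleGraph.chromaticNumber_le_iff_colorable.2 (toH _ (greedy_color G hd))
    rw [hchr] at this
    exact_mod_cast this
  · intro hN
    apply Nat.sInf_le
    have hram := hasRamsey_fin G hd hΔ hd1 hΔ1 hn hq hGq hN
    intro C
    rcases hram C with ⟨φ, hφ⟩ | ⟨φ, hφ⟩
    · left
      refine ⟨f.symm.toEmbedding.trans φ, ?_⟩
      intro a b hab
      apply hφ
      rw [hadj]; simpa using hab
    · right
      refine ⟨f.symm.toEmbedding.trans φ, ?_⟩
      intro a b hab
      apply hφ
      rw [hadj]; simpa using hab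

theorem ramsey_le_trivial {W : Type*} [Fintype W] (H : SimpleGraph W) {q n : ℕ} (hq : q ≤ 1)
    (hcard : Fintype.card W = n) (hchr : H.chromaticNumber = (q : ℕ∞)) : ramseyNumber H ≤ n := by
  have hHq : H.Colorable q := SimpleGraph.chromaticNumber_le_iff_colorable.1 hchr.le
  obtain ⟨c⟩ := hHq.mono hq
  apply Nat.sInf_le
  intro C
  left
  refine ⟨((Fintype.equivFin W).trans (finCongr hcard)).toEmbedding, ?_⟩
  intro a b hab
  exact absurd (Subsingleton.elim _ _) (c.valid hab)

theorem log_mul_le {d q : ℕ} (hd : 2 ≤ d) (hq : 2 ≤ q) (hqd : q ≤ d + 1) :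
    (d : ℝ) * Real.logb 2 q ≤ d * Real.logb 2 d + 3 / 2 := by
  have hd0 : (0 : ℝ) < d := by positivity
  have h2 : (0 : ℝ) < Real.log 2 := Real.log_pos (by norm_num)
  have hq0 : (0 : ℝ) < q := by positivity
  have h1 : Real.log q ≤ Real.log d + 1 / d := by
    have e1 : Real.log q ≤ Real.log (d * (1 + 1 / d)) := by
      apply Real.log_le_log hq0
      have : (d : ℝ) * (1 + 1 / d) = d + 1 := by field_simp
      rw [this]
      exact_mod_cast hqd
    rw [Real.log_mul hd0.ne' (by positivity)] at e1
    have e2 := Real.log_le_sub_one_of_pos (x := 1 + 1 / (d : ℝ)) (by positivity)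
    linarith
  unfold Real.logb
  have h3 : (d : ℝ) * Real.log q ≤ d * Real.log d + 1 := by
    calc (d : ℝ) * Real.log q ≤ d * (Real.log d + 1 / d) := by gcongr
      _ = _ := by field_simp
  have h4 := Real.log_two_gt_d9
  have e : (d : ℝ) * (Real.log d / Real.log 2) + 3 / 2 =
      (d * Real.log d + 3 / 2 * Real.log 2) / Real.log 2 := by field_simp
  rw [e, ← mul_div_assoc]
  apply div_le_div_of_nonneg_right _ h2.le
  linarith

theorem numeric_real {d L lam h : ℝ} (hd : 2 ≤ d) (hL : 1 ≤ L) (hlam : 1 ≤ lam)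
    (hdl : d * lam ≤ d * L + 3 / 2)
    (hh : (h ≤ lam + 1 ∧ 3 ≤ lam) ∨ (3 * h ≤ 4 * lam ∧ lam ≤ 3)) :
    2 + h * (1 + d * (3 + L + 2 * lam)) ≤ lam * (7 * d + 8 + (3 * d + 2) * L) := by
  have hpos : 0 ≤ 1 + d * (3 + L + 2 * lam) := by positivity
  rcases hh with ⟨h1, h2⟩ | ⟨h1, h2⟩
  · have e1 : h * (1 + d * (3 + L + 2 * lam)) ≤ (lam + 1) * (1 + d * (3 + L + 2 * lam)) := by
      gcongr
    obtain ⟨z, hz⟩ : ∃ z, z = d * L - d * lam := ⟨_, rfl⟩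
    have hz1 : -(3 / 2) ≤ z := by linarith
    have e2 : 0 ≤ (2 * lam - 1) * (z + 3 / 2) := by
      apply mul_nonneg <;> linarith
    have e3 : 0 ≤ d * (lam - 3) := by
      apply mul_nonneg <;> linarith
    have e4 : 0 ≤ L * lam := by positivity
    have key : lam * (7 * d + 8 + (3 * d + 2) * L) - (2 + (lam + 1) * (1 + d * (3 + L + 2 * lam)))
      = (2 * lam - 1) * (z + 3 / 2) + d * (lam - 3) + 2 * (L * lam) + 4 * lam + 3 / 2 - 3 := by
      rw [hz]; ring
    linarith
  · have e1 : h * (1 + d * (3 + L + 2 * lam)) ≤ (4 / 3 * lam) * (1 + d * (3 + L + 2 * lam)) := by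
      gcongr
      linarith
    have e2 : d * lam ≤ d * 3 := by gcongr
    have e3 : 2 + 4 / 3 * (1 + d * (3 + L + 2 * lam)) ≤ 7 * d + 8 + (3 * d + 2) * L := by
      nlinarith
    have e4 := mul_le_mul_of_nonneg_left e3 (by linarith : (0 : ℝ) ≤ lam)
    nlinarith

theorem le_logb_of_pow_le {a q : ℕ} (h : 2 ^ a ≤ q) : (a : ℝ) ≤ Real.logb 2 q := by
  have hq : 0 < q := lt_of_lt_of_le (by positivity) h
  rw [Real.le_logb_iff_rpow_le (by norm_num) (by exact_mod_cast hq), Real.rpow_natCast]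
  exact_mod_cast h

theorem numeric_bound {d q h : ℕ} (hd : 2 ≤ d) (hq : 2 ≤ q) (hqd : q ≤ d + 1)
    (hh : 2 ^ h < 2 * q) :
    (4 : ℝ) * (2 * (8 * d * (q : ℝ) ^ 2) ^ d) ^ h ≤
      ((2 : ℝ) ^ (7 * d + 8) * (d : ℝ) ^ (3 * d + 2)) ^ (Real.logb 2 q) := by
  have hd0 : (0 : ℝ) < d := by positivity
  have hq0 : (0 : ℝ) < q := by positivity
  have hB : (0 : ℝ) < (2 : ℝ) ^ (7 * d + 8) * (d : ℝ) ^ (3 * d + 2) := by positivity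
  have hL : (1 : ℝ) ≤ Real.logb 2 d := by
    simpa using le_logb_of_pow_le (a := 1) (q := d) (by simpa using hd)
  have hlam : (1 : ℝ) ≤ Real.logb 2 q := by
    simpa using le_logb_of_pow_le (a := 1) (q := q) (by simpa using hq)
  rw [← Real.logb_le_logb (b := 2) (by norm_num) (by positivity) (by positivity),
    Real.logb_rpow_eq_mul_logb_of_pos hB]
  have l2 : Real.logb 2 2 = 1 := Real.logb_self_eq_one (by norm_num)
  have l4 : Real.logb 2 4 = 2 := by
    rw [show (4 : ℝ) = 2 ^ 2 by norm_num, Real.logb_pow, l2]; norm_num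
  have l8 : Real.logb 2 8 = 3 := by
    rw [show (8 : ℝ) = 2 ^ 3 by norm_num, Real.logb_pow, l2]; norm_num
  rw [Real.logb_mul (by norm_num) (by positivity), Real.logb_pow,
    Real.logb_mul (by norm_num) (by positivity), Real.logb_pow,
    Real.logb_mul (by positivity) (by positivity), Real.logb_mul (by positivity) (by positivity),
    Real.logb_pow, Real.logb_mul (by positivity) (by positivity), Real.logb_pow, Real.logb_pow,
    l2, l4, l8]
  push_cast
  have hcases : ((h : ℝ) ≤ Real.logb 2 q + 1 ∧ 3 ≤ Real.logb 2 q) ∨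
      (3 * (h : ℝ) ≤ 4 * Real.logb 2 q ∧ Real.logb 2 q ≤ 3) := by
    rcases Nat.lt_or_ge q 8 with hq8 | hq8
    · right
      constructor
      · have hpow : 2 ^ (3 * h) ≤ q ^ 4 := by
          have h5 : h < 4 := by
            by_contra hc
            have : 2 ^ 4 ≤ 2 ^ h := Nat.pow_le_pow_right (by norm_num) (by omega)
            omega
          interval_cases h <;> interval_cases q <;> simp at hh ⊢
        have := le_logb_of_pow_le hpow
        push_cast at this
        rw [Real.logb_pow] at this
        exact_mod_cast this
      · rw [← l8]
        apply Real.logb_le_logb_of_le (by norm_num) hq0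
        exact_mod_cast hq8.le
    · left
      constructor
      · rcases Nat.eq_zero_or_pos h with h0 | h0
        · subst h0; push_cast; linarith
        · obtain ⟨k, rfl⟩ : ∃ k, h = k + 1 := ⟨h - 1, by omega⟩
          rw [pow_succ] at hh
          have := le_logb_of_pow_le (a := k) (q := q) (by omega)
          push_cast; linarith
      · have := le_logb_of_pow_le (a := 3) (q := q) (by simpa using hq8)
        simpa using this
  have := numeric_real (d := d) (h := h) (by exact_mod_cast hd) hL hlam (log_mul_le hd hq hqd) hcases
  linarith

theorem ramsey_bound (W : Type) [Fintype W] (H : SimpleGraph W) (d Δ q n : ℕ)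
    (hd : 2 ≤ d) (hΔ : 2 ≤ Δ) (hdeg : DDeltaDegenerate H d Δ)
    (hchr : H.chromaticNumber = (q : ℕ∞)) (hcard : Fintype.card W = n) :
    (ramseyNumber H : ℝ) ≤
        ((2 : ℝ) ^ (7 * d + 8) * (d : ℝ) ^ (3 * d + 2) * Δ) ^ (Real.logb 2 q) * n := by
  rcases Nat.lt_or_ge q 2 with hq | hq
  · have h1 := ramsey_le_trivial H (by omega : q ≤ 1) hcard hchr
    have h2 : Real.logb 2 q = 0 := by
      interval_cases q <;> simp
    rw [h2, Real.rpow_zero, one_mul]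
    exact_mod_cast h1
  · have hn : 0 < n := by
      by_contra h0
      have h0 : n = 0 := by omega
      rw [h0, Fintype.card_eq_zero_iff] at hcard
      rw [SimpleGraph.chromaticNumber_eq_zero_of_isEmpty] at hchr
      have : q = 0 := by exact_mod_cast hchr.symm
      omega
    set h := Nat.clog 2 q with hh
    have hq2 : q ≤ 2 ^ h := Nat.le_pow_clog (by norm_num) q
    have hpos : 0 < h := Nat.clog_pos (by norm_num) hq
    have hlt : 2 ^ (h - 1) < q := Nat.pow_pred_clog_lt_self (by norm_num) (by omega)
    have h2q : 2 ^ h < 2 * q := by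
      obtain ⟨k, hk⟩ : ∃ k, h = k + 1 := ⟨h - 1, by omega⟩
      rw [hk] at hlt ⊢
      rw [pow_succ]; simp at hlt; omega
    obtain ⟨b, hb, hN⟩ : ∃ b : ℕ, (b : ℝ) ≤ Real.logb 2 q ∧
        ramseyNumber H ≤ (2 * (8 * d * q ^ 2) ^ d) ^ h * Δ ^ b * (4 * n) := by
      rcases hq2.eq_or_lt with heq | hne
      · exact ⟨h, le_logb_of_pow_le heq.ge,
          (ramsey_le_nat H hdeg (by omega) (by omega) hcard hn (by omega) hchr).2
            (Or.inl ⟨hq2, le_rfl⟩)⟩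
      · exact ⟨h - 1, le_logb_of_pow_le hlt.le,
          (ramsey_le_nat H hdeg (by omega) (by omega) hcard hn (by omega) hchr).2
            (Or.inr ⟨hne, le_rfl⟩)⟩
    have hqd : q ≤ d + 1 :=
      (ramsey_le_nat (h := 0) (N := 0) H hdeg (by omega) (by omega) hcard hn (by omega) hchr).1
    have hnum := numeric_bound hd hq hqd h2q
    have hΔb : (Δ : ℝ) ^ b ≤ (Δ : ℝ) ^ (Real.logb 2 q) := by
      rw [← Real.rpow_natCast]
      apply Real.rpow_le_rpow_of_exponent_le _ hb
      exact_mod_cast (by omega : 1 ≤ Δ)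
    rw [Real.mul_rpow (by positivity) (by positivity)]
    calc (ramseyNumber H : ℝ) ≤ (2 * (8 * d * (q : ℝ) ^ 2) ^ d) ^ h * Δ ^ b * (4 * n) := by
          exact_mod_cast hN
      _ = (4 * (2 * (8 * d * (q : ℝ) ^ 2) ^ d) ^ h) * Δ ^ b * n := by ring
      _ ≤ _ := by gcongr

/-- There is a constant `c` such that every `(d,Δ)`-degenerate graph `H` (with `d, Δ ≥ 2`) with
`n` vertices and chromatic number `q` satisfies `r(H) ≤ (d^d Δ)^{c log q} n`; more precisely,
`r(H) ≤ (2^{7d+8} d^{3d+2} Δ)^{log₂ q} n`. -/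
theorem stmt_12 :
    (∃ c : ℝ, 0 < c ∧ ∀ (W : Type) (_ : Fintype W) (H : SimpleGraph W) (d Δ q n : ℕ),
      2 ≤ d → 2 ≤ Δ → DDeltaDegenerate H d Δ → H.chromaticNumber = (q : ℕ∞) →
      Fintype.card W = n →
      (ramseyNumber H : ℝ) ≤ ((d : ℝ) ^ d * Δ) ^ (c * Real.logb 2 q) * n) ∧
    (∀ (W : Type) (_ : Fintype W) (H : SimpleGraph W) (d Δ q n : ℕ),
      2 ≤ d → 2 ≤ Δ → DDeltaDegenerate H d Δ → H.chromaticNumber = (q : ℕ∞) →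
      Fintype.card W = n →
      (ramseyNumber H : ℝ) ≤
        ((2 : ℝ) ^ (7 * d + 8) * (d : ℝ) ^ (3 * d + 2) * Δ) ^ (Real.logb 2 q) * n) := by
  constructor
  · refine ⟨15, by norm_num, ?_⟩
    intro W _ H d Δ q n hd hΔ hdeg hchr hcard
    refine (ramsey_bound W H d Δ q n hd hΔ hdeg hchr hcard).trans ?_
    have hlam : 0 ≤ Real.logb 2 q := by
      rcases Nat.eq_zero_or_pos q with h0 | h0
      · subst h0; simp
      · exact Real.logb_nonneg (by norm_num) (by exact_mod_cast h0)
    have hd' : (2 : ℝ) ≤ d := by exact_mod_cast hd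
    have hΔ' : (1 : ℝ) ≤ Δ := by exact_mod_cast (by omega : 1 ≤ Δ)
    rw [Real.rpow_mul (by positivity)]
    have hbase : (2 : ℝ) ^ (7 * d + 8) * (d : ℝ) ^ (3 * d + 2) * Δ ≤
        ((d : ℝ) ^ d * Δ) ^ (15 : ℝ) := by
      rw [show (15 : ℝ) = ((15 : ℕ) : ℝ) by norm_num, Real.rpow_natCast, mul_pow, ← pow_mul]
      have h1 : (2 : ℝ) ^ (7 * d + 8) * (d : ℝ) ^ (3 * d + 2) ≤ (d : ℝ) ^ (d * 15) := by
        calc (2 : ℝ) ^ (7 * d + 8) * (d : ℝ) ^ (3 * d + 2)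
            ≤ (d : ℝ) ^ (7 * d + 8) * (d : ℝ) ^ (3 * d + 2) := by gcongr
          _ = (d : ℝ) ^ (10 * d + 10) := by rw [← pow_add]; congr 1; ring
          _ ≤ _ := pow_le_pow_right₀ (by linarith) (by omega)
      have h2 : (Δ : ℝ) ≤ (Δ : ℝ) ^ 15 := le_self_pow₀ hΔ' (by norm_num)
      gcongr
    gcongr
  · intro W _ H d Δ q n hd hΔ hdeg hchr hcard
    exact ramsey_bound W H d Δ q n hd hΔ hdeg hchr hcard
end
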